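/- Assume Conditions (C). Let m = m_n satisfy f·ℓ_n^{2/3}/C ≤ m ≤ 4f·ℓ_n^{2/3}/C. Then for f = f_n = o(n^{1/3}) sufficiently large there exists a constant A > 0 such that P( sup_{1 ≤ i ≤ m} L_i ≥ 10·f²·ℓ_n^{1/3}/C ) ≤ A·exp(−f/A), where L is the reflected exploration process of G(W, p_f). -/

import Mathlib

open MeasureTheory Filter Asymptotics
open scoped Classical ENNReal Topology

noncomputable section

/-- `ℓ_n`: the total weight. -/
def ell (w : ∀ n : ℕ, Fin n → ℝ) (n : ℕ) : ℝ := ∑ i, w n i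

/-- Conditions (C) on the triangular array of weights, relative to the law `μ` of the
limiting random variable `W`. -/
structure CondC (w : ∀ n : ℕ, Fin n → ℝ) (μ : Measure ℝ) : Prop where
  isProb : IsProbabilityMeasure μ
  pos : ∀ᵐ x ∂μ, 0 < x
  w_pos : ∀ n, ∀ i : Fin n, 0 < w n i
  w_anti : ∀ n, ∀ i j : Fin n, i ≤ j → w n j ≤ w n i
  int3 : Integrable (fun x => x ^ 3) μ
  moment_eq : ∫ x, x ^ 2 ∂μ = ∫ x, x ∂μ
  weak : ∀ g : BoundedContinuousFunction ℝ ℝ,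
    Tendsto (fun n : ℕ => (∑ i : Fin n, g (w n i)) / (n : ℝ)) atTop (𝓝 (∫ x, g x ∂μ))
  ell_asymp : (fun n : ℕ => ell w n - (∫ x, x ∂μ) * (n : ℝ)) =o[atTop]
      fun n : ℕ => (n : ℝ) ^ ((2 : ℝ) / 3)
  sq_asymp : (fun n : ℕ => (∑ i : Fin n, (w n i) ^ 2) - (∫ x, x ^ 2 ∂μ) * (n : ℝ)) =o[atTop]
      fun n : ℕ => (n : ℝ) ^ ((2 : ℝ) / 3)
  cube_asymp : (fun n : ℕ => (∑ i : Fin n, (w n i) ^ 3) - (∫ x, x ^ 3 ∂μ) * (n : ℝ)) =o[atTop]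
      fun _ : ℕ => (1 : ℝ)
  max_asymp : (fun n : ℕ => ⨆ i : Fin n, w n i) =o[atTop] fun n : ℕ => (n : ℝ) ^ ((1 : ℝ) / 3)

/-- The constant `C = E[W³]/E[W]`. -/
def Cconst (μ : Measure ℝ) : ℝ := (∫ x, x ^ 3 ∂μ) / (∫ x, x ∂μ)

/-- The critical percolation parameter `p_f = (ℓ_n^{1/3} + f_n)/ℓ_n^{4/3}`. -/
def pf (w : ∀ n : ℕ, Fin n → ℝ) (f : ℕ → ℝ) (n : ℕ) : ℝ :=
  (ell w n ^ ((1 : ℝ) / 3) + f n) / ell w n ^ ((4 : ℝ) / 3)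

/-- A Bernoulli-type measure on `Bool` with parameter `p`. -/
def bern (p : ℝ) : Measure Bool :=
  ENNReal.ofReal (1 - p) • Measure.dirac false + ENNReal.ofReal p • Measure.dirac true

/-- The law of the independent edge indicators of the rank-1 inhomogeneous random graph
`G(W,p)`: the indicator attached to the (ordered) pair `(i,j)` is Bernoulli with success
probability `1 - exp (- w i * w j * p)`, all independent. -/
def graphMeasure (n : ℕ) (wn : Fin n → ℝ) (p : ℝ) : Measure (Fin n → Fin n → Bool) :=
  Measure.pi fun i => Measure.pi fun j => bern (1 - Real.exp (-(wn i * wn j * p)))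

/-- The simple graph built from a sample of edge indicators: `i ~ j` iff `i ≠ j` and the
indicator of the pair `(min i j, max i j)` is `true`. -/
def graphOf {n : ℕ} (ω : Fin n → Fin n → Bool) : SimpleGraph (Fin n) :=
  SimpleGraph.fromRel fun i j => ω (min i j) (max i j) = true

/-- The size (number of vertices) of a connected component. -/
def csize {n : ℕ} (G : SimpleGraph (Fin n)) (c : G.ConnectedComponent) : ℕ :=
  Nat.card {v : Fin n // G.connectedComponentMk v = c}

/-- The weight of a connected component: sum of the weights of its vertices. -/
def cweight {n : ℕ} (wn : Fin n → ℝ) (G : SimpleGraph (Fin n)) (c : G.ConnectedComponent) : ℝ :=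
  ∑ v : Fin n, if G.connectedComponentMk v = c then wn v else 0

/-- The number of edges of a connected component. -/
def cedges {n : ℕ} (G : SimpleGraph (Fin n)) (c : G.ConnectedComponent) : ℕ :=
  Nat.card {e : Sym2 (Fin n) // e ∈ G.edgeSet ∧ ∀ v ∈ e, G.connectedComponentMk v = c}

/-- The surplus (excess) of a connected component: edges − vertices + 1. -/
def csurplus {n : ℕ} (G : SimpleGraph (Fin n)) (c : G.ConnectedComponent) : ℤ :=
  (cedges G c : ℤ) - (csize G c : ℤ) + 1

/-- `c` is a largest connected component. -/
def isLargest {n : ℕ} (G : SimpleGraph (Fin n)) (c : G.ConnectedComponent) : Prop :=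
  ∀ c', csize G c' ≤ csize G c

/-- The finset of connected components of a graph on `Fin n`. -/
def comps {n : ℕ} (G : SimpleGraph (Fin n)) : Finset G.ConnectedComponent :=
  Finset.univ.image G.connectedComponentMk

/-- The law of the size-biased random order without replacement `(v(1),…,v(n))`, seen as a
measure on functions `Fin n → Fin n` (supported on permutations `σ`, with
`P(v = σ) = ∏_i w (σ i) / (ℓ_n − ∑_{k<i} w (σ k))`). -/
def sbMeasure (n : ℕ) (wn : Fin n → ℝ) : Measure (Fin n → Fin n) :=
  Measure.sum fun σ : Equiv.Perm (Fin n) =>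
    ENNReal.ofReal (∏ i : Fin n,
        wn (σ i) / ((∑ k, wn k) - ∑ k ∈ Finset.univ.filter fun k => k < i, wn (σ k))) •
      Measure.dirac ⇑σ

/-- The joint law of (edge indicators of `G(W,p)`, size-biased order), the two being
independent. -/
def expMeasure' (n : ℕ) (wn : Fin n → ℝ) (p : ℝ) :
    Measure ((Fin n → Fin n → Bool) × (Fin n → Fin n)) :=
  Measure.sum fun σ : Equiv.Perm (Fin n) =>
    ENNReal.ofReal (∏ i : Fin n,
        wn (σ i) / ((∑ k, wn k) - ∑ k ∈ Finset.univ.filter fun k => k < i, wn (σ k))) •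
      (graphMeasure n wn p).map fun g => (g, ⇑σ)

/-- `sbW wn vord k` is `w_{v(k)}` (1-based), with the conventions `w_{v(0)} = 0` and
`w_{v(k)} = 0` for `k > n`. -/
def sbW {n : ℕ} (wn : Fin n → ℝ) (vord : Fin n → Fin n) (k : ℕ) : ℝ :=
  if h : k - 1 < n then (if k = 0 then 0 else wn (vord ⟨k - 1, h⟩)) else 0

/-- The (0-based) first position, in the order `vord`, of a vertex of the component `c`;
this governs the order in which components are discovered by the breadth-first walk. -/
def firstIdx {n : ℕ} (G : SimpleGraph (Fin n)) (vord : Fin n → Fin n)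
    (c : G.ConnectedComponent) : ℕ :=
  sInf {i : ℕ | ∃ h : i < n, G.connectedComponentMk (vord ⟨i, h⟩) = c}

/-- The number of vertices explored strictly before the exploration of the component `c`
starts: components are explored in the order of their first appearance in `vord`, and the
exploration of `c` occupies the steps `startT c + 1, …, startT c + csize c`. -/
def startT {n : ℕ} (G : SimpleGraph (Fin n)) (vord : Fin n → Fin n)
    (c : G.ConnectedComponent) : ℕ :=
  ∑ v : Fin n, if firstIdx G vord (G.connectedComponentMk v) < firstIdx G vord c then 1 else 0

/-- The state (explored vertices, queue of discovered-but-unexplored vertices) of the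
breadth-first walk after `i` steps; roots are chosen as the first undiscovered vertex in the
order `vord`, and children are queued in the order `vord`. -/
def bfwQueue {n : ℕ} (G : SimpleGraph (Fin n)) (vord : Fin n → Fin n) :
    ℕ → Finset (Fin n) × List (Fin n)
  | 0 => (∅, [])
  | i + 1 =>
    let s := bfwQueue G vord i
    let q : List (Fin n) :=
      if s.2.isEmpty then ((List.ofFn vord).filter fun v => decide (v ∉ s.1)).take 1 else s.2
    match q with
    | [] => (s.1, [])
    | v :: rest =>
      (insert v s.1,
        rest ++ (List.ofFn vord).filter fun u => decide (G.Adj v u ∧ u ∉ s.1 ∧ u ∉ q))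

/-- The reflected exploration process `L` of the breadth-first walk:
`L_0 = 1`, `L_{i+1} = max (L_i + c(i+1) - 1) 1`. -/
def Lproc {n : ℕ} (G : SimpleGraph (Fin n)) (vord : Fin n → Fin n) (i : ℕ) : ℕ :=
  max (bfwQueue G vord i).2.length 1

/-- `discNbrs G vord i` is the number of neighbours of `v(i+1)` (0-based: `vord i`) outside
`{v(1),…,v(i+1)}`, i.e. the increment `X⁰_{i+1} + 1` of the process `L⁰`. -/
def discNbrs {n : ℕ} (G : SimpleGraph (Fin n)) (vord : Fin n → Fin n) (i : ℕ) : ℕ :=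
  Nat.card {j : Fin n // (∃ h : i < n, G.Adj (vord ⟨i, h⟩) j) ∧
    ∀ k : ℕ, ∀ hk : k < n, k ≤ i → vord ⟨k, hk⟩ ≠ j}

/-- The process `L⁰`: `L⁰_0 = 1`, `L⁰_{i+1} = L⁰_i + X⁰_{i+1}` where
`X⁰_{i+1} = ∑_{j ∉ {v(1),…,v(i+1)}} Y(v(i+1), j) − 1`. -/
def L0 {n : ℕ} (G : SimpleGraph (Fin n)) (vord : Fin n → Fin n) (m : ℕ) : ℤ :=
  1 - (m : ℤ) + ∑ i ∈ Finset.range m, (discNbrs G vord i : ℤ)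

/-- The deterministic-drift process `L̃^h`, defined by
`L̃^h_m + m − 1 = ∑_{i=1}^m ∑_{k > i+h} (1 − exp (−w_{v(i)} w_{v(k)} p))`,
the inner sum being over positions `k ≤ n` in the size-biased order. -/
def Ltilde {n : ℕ} (wn : Fin n → ℝ) (p : ℝ) (vord : Fin n → Fin n) (h m : ℕ) : ℝ :=
  1 - (m : ℝ) + ∑ i ∈ Finset.range m,
    if hi : i < n then
      ∑ k : Fin n, if i + h < (k : ℕ) then
        1 - Real.exp (-(wn (vord ⟨i, hi⟩) * wn (vord k) * p)) else 0
    else 0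

/-- The law of the independent exponential clocks `(T_k)_{k ≤ n}`, `T_k` of rate `w_k / ℓ_n`. -/
def clocksMeasure (n : ℕ) (wn : Fin n → ℝ) : Measure (Fin n → ℝ) :=
  Measure.pi fun k => ProbabilityTheory.expMeasure (wn k / ∑ i, wn i)

/-- `N(x)`: the number of clocks that have rung by time `x`. -/
def Nclock {n : ℕ} (x : ℝ) (ω : Fin n → ℝ) : ℕ :=
  ∑ k : Fin n, if ω k ≤ x then 1 else 0

/-- `X(x)`: the total weight of the clocks that have rung by time `x`. -/
def Xclock {n : ℕ} (wn : Fin n → ℝ) (x : ℝ) (ω : Fin n → ℝ) : ℝ :=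
  ∑ k : Fin n, if ω k ≤ x then wn k else 0

/-- Conditions (C2) on a pair of sequences `(a, b)`, relative to the constant `Ā`. -/
structure Cond2 (w : ∀ n : ℕ, Fin n → ℝ) (Abar : ℝ) (a b : ℕ → ℝ) : Prop where
  exp_lt : ∀ᶠ n : ℕ in atTop,
    Real.exp (-(b n) ^ 2 / (Abar * (b n * (n : ℝ) ^ ((1 : ℝ) / 3) + a n))) < 1 / 4
  a_top : Tendsto a atTop atTop
  b_top : Tendsto b atTop atTop
  a_lito : a =o[atTop] fun n : ℕ => (n : ℝ)
  b_bigO : b =O[atTop] a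
  a_bigO : a =O[atTop] fun n => b n * ell w n ^ ((1 : ℝ) / 3)
  a_sq_bigO : (fun n => a n ^ 2) =O[atTop] fun n => b n * ell w n

/-- Conditions (C3) on a quadruple of sequences `(a, b, c, d)`. -/
structure Cond3 (w : ∀ n : ℕ, Fin n → ℝ) (Abar : ℝ) (a b c d : ℕ → ℝ) : Prop where
  sum_lito : (fun n => a n + c n) =o[atTop] fun n : ℕ => (n : ℝ)
  diff_top : Tendsto (fun n => a n - b n) atTop atTop
  d_bigO : d =O[atTop] fun n => a n - b n
  c2 : Cond2 w Abar (fun n => Real.sqrt ((a n - b n) * (a n + c n))) d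

/-- The list of component sizes, sorted in decreasing order. -/
def sizesList {n : ℕ} (G : SimpleGraph (Fin n)) : List ℕ :=
  (((comps G).val.map fun c => csize G c).sort (· ≤ ·)).reverse

/-- `kthSize G k` is the size of the `(k+1)`-st largest connected component of `G`
(`0` if there is no such component). -/
def kthSize {n : ℕ} (G : SimpleGraph (Fin n)) (k : ℕ) : ℕ := (sizesList G).getD k 0

end


theorem sb_sum_one (n : ℕ) (wn : Fin n → ℝ) (hw : ∀ i, 0 < wn i) :
    ∑ σ : Equiv.Perm (Fin n), ∏ i : Fin n,
      wn (σ i) / ((∑ k, wn k) - ∑ k ∈ Finset.univ.filter fun k => k < i, wn (σ k)) = 1 := by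
  induction n with
  | zero => simp
  | succ n ih =>
    rw [← Equiv.sum_comp Equiv.Perm.decomposeFin.symm, Fintype.sum_prod_type]
    have hpos : 0 < ∑ k, wn k := Finset.sum_pos (fun i _ => hw i) Finset.univ_nonempty
    have key : ∀ a : Fin (n+1), ∑ e : Equiv.Perm (Fin n), ∏ i : Fin (n+1),
        wn (Equiv.Perm.decomposeFin.symm (a, e) i) /
          ((∑ k, wn k) - ∑ k ∈ Finset.univ.filter fun k => k < i,
            wn (Equiv.Perm.decomposeFin.symm (a, e) k)) = wn a / ∑ k, wn k := by
      intro a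
      have h := ih (fun i => wn (Equiv.swap 0 a i.succ)) (fun i => hw _)
      have htot : ∑ i : Fin n, wn (Equiv.swap 0 a i.succ) = (∑ k, wn k) - wn a := by
        have := Equiv.sum_comp (Equiv.swap 0 a) wn
        rw [Fin.sum_univ_succ] at this
        simp only [Equiv.swap_apply_left] at this
        linarith
      rw [← mul_one (wn a / ∑ k, wn k), ← h, Finset.mul_sum]
      refine Finset.sum_congr rfl fun e _ => ?_
      rw [Fin.prod_univ_succ]
      congr 1
      · simp
      · refine Finset.prod_congr rfl fun i _ => ?_
        rw [htot, Equiv.Perm.decomposeFin_symm_apply_succ]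
        congr 1
        rw [sub_sub]
        congr 1
        rw [Finset.sum_filter, Finset.sum_filter, Fin.sum_univ_succ]
        simp
    rw [Finset.sum_congr rfl fun a _ => key a, ← Finset.sum_div, div_self hpos.ne']

instance bern_prob (x : ℝ) [hx : Fact (0 ≤ x)] : IsProbabilityMeasure (bern (1 - Real.exp (-x))) := by
  have h0 := hx.out
  constructor
  have h1 : 0 ≤ 1 - Real.exp (-x) := by
    have := Real.exp_le_one_iff.2 (neg_nonpos.2 h0); linarith
  simp only [bern, Measure.coe_add, Measure.coe_smul, Pi.add_apply, Pi.smul_apply, measure_univ,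
    smul_eq_mul, mul_one]
  rw [← ENNReal.ofReal_add _ h1]
  · simp
  · simp [Real.exp_nonneg]

theorem expMeasure_le (n : ℕ) (wn : Fin n → ℝ) (hw : ∀ i, 0 < wn i) (p : ℝ)
    (B : Set ((Fin n → Fin n → Bool) × (Fin n → Fin n))) (b : ℝ≥0∞)
    (h : ∀ σ : Equiv.Perm (Fin n), graphMeasure n wn p {g | (g, (σ : Fin n → Fin n)) ∈ B} ≤ b) :
    expMeasure' n wn p B ≤ b := by
  have hB : MeasurableSet B := MeasurableSet.of_discrete
  unfold expMeasure'
  rw [Measure.sum_apply _ hB, tsum_fintype]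
  have hnn : ∀ σ : Equiv.Perm (Fin n), 0 ≤ ∏ i : Fin n,
      wn (σ i) / ((∑ k, wn k) - ∑ k ∈ Finset.univ.filter fun k => k < i, wn (σ k)) := by
    intro σ
    refine Finset.prod_nonneg fun i _ => div_nonneg (hw _).le ?_
    rw [sub_nonneg, ← Equiv.sum_comp σ wn]
    exact Finset.sum_le_sum_of_subset_of_nonneg (Finset.filter_subset _ _) fun _ _ _ => (hw _).le
  calc _ ≤ ∑ σ : Equiv.Perm (Fin n), ENNReal.ofReal (∏ i : Fin n,
        wn (σ i) / ((∑ k, wn k) - ∑ k ∈ Finset.univ.filter fun k => k < i, wn (σ k))) * b := by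
        refine Finset.sum_le_sum fun σ _ => ?_
        rw [Measure.smul_apply, smul_eq_mul, Measure.map_apply (measurable_of_finite _) hB]
        gcongr
        exact h σ
    _ = b := by
        rw [← Finset.sum_mul, ← ENNReal.ofReal_sum_of_nonneg fun σ _ => hnn σ, sb_sum_one n wn hw]
        simp

theorem bern_prob' {n : ℕ} {wn : Fin n → ℝ} (hw : ∀ i, 0 < wn i) {p : ℝ} (hp : 0 ≤ p) (i j : Fin n) :
    IsProbabilityMeasure (bern (1 - Real.exp (-(wn i * wn j * p)))) :=
  haveI : Fact (0 ≤ wn i * wn j * p) := ⟨mul_nonneg (mul_pos (hw i) (hw j)).le hp⟩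
  inferInstance

theorem graph_prob {n : ℕ} {wn : Fin n → ℝ} (hw : ∀ i, 0 < wn i) {p : ℝ} (hp : 0 ≤ p) :
    IsProbabilityMeasure (graphMeasure n wn p) := by
  have := bern_prob' hw hp
  unfold graphMeasure
  infer_instance

theorem graph_indep {n : ℕ} {wn : Fin n → ℝ} (hw : ∀ i, 0 < wn i) {p : ℝ} (hp : 0 ≤ p) :
    ProbabilityTheory.iIndepFun
      (fun (e : Fin n × Fin n) (ω : Fin n → Fin n → Bool) => ω e.1 e.2) (graphMeasure n wn p) := by
  have := bern_prob' hw hp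
  have := ProbabilityTheory.iIndepFun_uncurry_infinitePi'
    (X := fun (_ _ : Fin n) (x : Bool) => x)
    (fun i j => bern (1 - Real.exp (-(wn i * wn j * p)))) (fun _ _ => measurable_id)
  simpa only [Measure.infinitePi_eq_pi, graphMeasure] using this

theorem graph_lintegral {n : ℕ} {wn : Fin n → ℝ} (hw : ∀ i, 0 < wn i) {p : ℝ} (hp : 0 ≤ p)
    (i j : Fin n) (h : Bool → ℝ≥0∞) :
    ∫⁻ ω, h (ω i j) ∂(graphMeasure n wn p) =
      ENNReal.ofReal (Real.exp (-(wn i * wn j * p))) * h false +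
      ENNReal.ofReal (1 - Real.exp (-(wn i * wn j * p))) * h true := by
  have := bern_prob' hw hp
  have h1 := (measurePreserving_eval
    (fun i => Measure.pi fun j => bern (1 - Real.exp (-(wn i * wn j * p)))) i)
  have h2 := (measurePreserving_eval
    (fun j => bern (1 - Real.exp (-(wn i * wn j * p)))) j)
  have h3 := (h2.comp h1).lintegral_comp (f := h) (measurable_of_finite _)
  simp only [Function.comp_def, Function.eval] at h3
  unfold graphMeasure
  rw [h3, bern]
  simp [lintegral_add_measure, lintegral_smul_measure]


theorem graph_inter {n : ℕ} {wn : Fin n → ℝ} (hw : ∀ i, 0 < wn i) {p : ℝ} (hp : 0 ≤ p)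
    (T1 T2 : Finset (Fin n × Fin n)) (hT : Disjoint T1 T2) (A B : Set (Fin n → Fin n → Bool))
    (hA : ∀ ω ω' : Fin n → Fin n → Bool, (∀ e ∈ T1, ω e.1 e.2 = ω' e.1 e.2) → ω ∈ A → ω' ∈ A)
    (hB : ∀ ω ω' : Fin n → Fin n → Bool, (∀ e ∈ T2, ω e.1 e.2 = ω' e.1 e.2) → ω ∈ B → ω' ∈ B) :
    graphMeasure n wn p (A ∩ B) = graphMeasure n wn p A * graphMeasure n wn p B := by
  have hi := (graph_indep hw hp).indepFun_finset T1 T2 hT (fun i => measurable_of_finite _)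
  have key : ∀ (T : Finset (Fin n × Fin n)) (A : Set (Fin n → Fin n → Bool)),
      (∀ ω ω' : Fin n → Fin n → Bool, (∀ e ∈ T, ω e.1 e.2 = ω' e.1 e.2) → ω ∈ A → ω' ∈ A) →
      A = (fun (ω : Fin n → Fin n → Bool) (e : T) => ω e.1.1 e.1.2) ⁻¹'
        ((fun (ω : Fin n → Fin n → Bool) (e : T) => ω e.1.1 e.1.2) '' A) := by
    intro T A h
    ext ω
    constructor
    · intro hω; exact ⟨ω, hω, rfl⟩
    · rintro ⟨ω', h', he⟩
      exact h ω' ω (fun e het => congrFun he ⟨e, het⟩) h'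
  rw [key T1 A hA, key T2 B hB]
  exact hi.measure_inter_preimage_eq_mul _ _ MeasurableSet.of_discrete MeasurableSet.of_discrete

/-- queue at the beginning of a step, after a possible choice of a root -/
noncomputable def bq {n : ℕ} (vord : Fin n → Fin n) (s : Finset (Fin n) × List (Fin n)) : List (Fin n) :=
  if s.2.isEmpty then ((List.ofFn vord).filter fun v => decide (v ∉ s.1)).take 1 else s.2

/-- undiscovered vertices at the beginning of a step -/
noncomputable def und {n : ℕ} (vord : Fin n → Fin n) (s : Finset (Fin n) × List (Fin n)) : Finset (Fin n) :=
  Finset.univ.filter fun u => u ∉ s.1 ∧ u ∉ bq vord s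

/-- children found in a step -/
noncomputable def ch {n : ℕ} (G : SimpleGraph (Fin n)) (vord : Fin n → Fin n)
    (s : Finset (Fin n) × List (Fin n)) : Finset (Fin n) :=
  match bq vord s with
  | [] => ∅
  | v :: _ => (und vord s).filter fun u => G.Adj v u

/-- transition given the children -/
noncomputable def stepR {n : ℕ} (vord : Fin n → Fin n)
    (s : Finset (Fin n) × List (Fin n)) (R : Finset (Fin n)) : Finset (Fin n) × List (Fin n) :=
  match bq vord s with
  | [] => (s.1, [])
  | v :: rest => (insert v s.1, rest ++ (List.ofFn vord).filter fun u => decide (u ∈ R))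

theorem bfw_succ {n : ℕ} (G : SimpleGraph (Fin n)) (vord : Fin n → Fin n) (i : ℕ) :
    bfwQueue G vord (i+1) =
      stepR vord (bfwQueue G vord i) (ch G vord (bfwQueue G vord i)) := by
  rw [bfwQueue]
  generalize bfwQueue G vord i = s
  change (match bq vord s with
    | [] => (s.1, [])
    | v :: rest =>
      (insert v s.1,
        rest ++ (List.ofFn vord).filter fun u => decide (G.Adj v u ∧ u ∉ s.1 ∧ u ∉ bq vord s))) = _
  unfold stepR ch und
  rcases bq vord s with _ | ⟨v, rest⟩
  · rfl
  · simp only [Prod.mk.injEq, true_and]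
    congr 1
    apply List.filter_congr
    intro u _
    simp only [Finset.mem_filter, Finset.mem_univ, true_and, decide_eq_decide]
    tauto

/-- weight of the vertex explored in a step -/
noncomputable def xw {n : ℕ} (wn : Fin n → ℝ) (vord : Fin n → Fin n)
    (s : Finset (Fin n) × List (Fin n)) : ℝ :=
  match bq vord s with
  | [] => 0
  | v :: _ => wn v

/-- drift of a step -/
noncomputable def dr {n : ℕ} (wn : Fin n → ℝ) (p : ℝ) (a : Fin n → ℝ) (vord : Fin n → Fin n)
    (s : Finset (Fin n) × List (Fin n)) : ℝ :=
  match bq vord s with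
  | [] => 0
  | v :: _ => ∑ u ∈ und vord s, a u * (1 - Real.exp (-(wn v * wn u * p)))

def validS {n : ℕ} (s : Finset (Fin n) × List (Fin n)) : Prop :=
  s.2.Nodup ∧ ∀ u ∈ s.2, u ∉ s.1

theorem bq_valid {n : ℕ} (vord : Fin n → Fin n) (s : Finset (Fin n) × List (Fin n))
    (hs : validS s) : (bq vord s).Nodup ∧ ∀ u ∈ bq vord s, u ∉ s.1 := by
  unfold bq
  split_ifs with h
  · constructor
    · rcases ((List.ofFn vord).filter fun v => decide (v ∉ s.1)) with _ | ⟨a, l⟩ <;> simp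
    · intro u hu
      have := List.mem_of_mem_take hu
      simpa using (List.mem_filter.1 this).2
  · exact hs

theorem ch_sub_und {n : ℕ} (G : SimpleGraph (Fin n)) (vord : Fin n → Fin n)
    (s : Finset (Fin n) × List (Fin n)) : ch G vord s ⊆ und vord s := by
  unfold ch
  split
  · simp
  · exact Finset.filter_subset _ _

theorem step_valid {n : ℕ} (vord : Fin n → Fin n) (hv : Function.Injective vord)
    (s : Finset (Fin n) × List (Fin n)) (hs : validS s) (R : Finset (Fin n))
    (hR : R ⊆ und vord s) : validS (stepR vord s R) := by
  have hb := bq_valid vord s hs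
  unfold stepR
  have hR' : ∀ u ∈ R, u ∉ s.1 ∧ u ∉ bq vord s := fun u hu => by
    simpa [und] using hR hu
  generalize hq : bq vord s = q at hb hR'
  rcases q with _ | ⟨v, rest⟩
  · simp [validS]
  · obtain ⟨h1, h2⟩ := hb
    rw [List.nodup_cons] at h1
    constructor
    · simp only
      rw [List.nodup_append]
      refine ⟨h1.2, ((List.nodup_ofFn.2 hv).filter _), ?_⟩
      intro a ha b hb hab
      subst hab
      have : a ∈ R := by simpa using (List.mem_filter.1 hb).2
      exact (hR' a this).2 (List.mem_cons_of_mem _ ha)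
    · intro u hu
      simp only at hu ⊢
      rw [List.mem_append] at hu
      rw [Finset.mem_insert]
      rintro (h | h)
      · subst h
        rcases hu with hu | hu
        · exact h1.1 hu
        · have : u ∈ R := by simpa using (List.mem_filter.1 hu).2
          exact (hR' u this).2 List.mem_cons_self
      · rcases hu with hu | hu
        · exact h2 u (List.mem_cons_of_mem _ hu) h
        · have : u ∈ R := by simpa using (List.mem_filter.1 hu).2
          exact (hR' u this).1 h

/-- the set of samples for which the compensated process exceeds `dev` within `k` steps while the
explored weight is at most `K` -/
noncomputable def Bad {n : ℕ} (wn : Fin n → ℝ) (p : ℝ) (a : Fin n → ℝ) (vord : Fin n → Fin n) (K dev : ℝ) :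
    ℕ → Finset (Fin n) × List (Fin n) → ℝ → Set (Fin n → Fin n → Bool)
  | 0, s, M => {_ω | dev ≤ M ∧ ∑ u ∈ s.1, wn u ≤ K}
  | k + 1, s, M => {ω | (dev ≤ M ∧ ∑ u ∈ s.1, wn u ≤ K) ∨
      ω ∈ Bad wn p a vord K dev k (stepR vord s (ch (graphOf ω) vord s))
        (M + (∑ u ∈ ch (graphOf ω) vord s, a u - dr wn p a vord s))}

theorem graphOf_adj {n : ℕ} (ω : Fin n → Fin n → Bool) (v u : Fin n) :
    (graphOf ω).Adj v u ↔ v ≠ u ∧ ω (min v u) (max v u) = true := by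
  unfold graphOf
  rw [SimpleGraph.fromRel_adj, min_comm u v, max_comm u v, or_self]

theorem step_sub {n : ℕ} (vord : Fin n → Fin n)
    (s : Finset (Fin n) × List (Fin n)) (R : Finset (Fin n)) : s.1 ⊆ (stepR vord s R).1 := by
  unfold stepR
  split
  · simp
  · exact Finset.subset_insert _ _

theorem Bad_weight {n : ℕ} {wn : Fin n → ℝ} (hw : ∀ i, 0 < wn i) (p : ℝ) (a : Fin n → ℝ)
    (vord : Fin n → Fin n) (K dev : ℝ) (k : ℕ) :
    ∀ (s : Finset (Fin n) × List (Fin n)) (M : ℝ) (ω : Fin n → Fin n → Bool),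
      ω ∈ Bad wn p a vord K dev k s M → ∑ u ∈ s.1, wn u ≤ K := by
  induction k with
  | zero => intro s M ω h; exact h.2
  | succ k ih =>
    intro s M ω h
    rcases h with h | h
    · exact h.2
    · refine le_trans ?_ (ih _ _ _ h)
      exact Finset.sum_le_sum_of_subset_of_nonneg (step_sub _ _ _) fun _ _ _ => (hw _).le

theorem ch_congr {n : ℕ} (vord : Fin n → Fin n)
    (s : Finset (Fin n) × List (Fin n)) (hs : validS s) (ω ω' : Fin n → Fin n → Bool)
    (h : ∀ i j, i ∉ s.1 → j ∉ s.1 → ω i j = ω' i j) :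
    ch (graphOf ω) vord s = ch (graphOf ω') vord s := by
  have hb := bq_valid vord s hs
  unfold ch
  generalize hq : bq vord s = q at hb
  rcases q with _ | ⟨v, rest⟩
  · rfl
  · apply Finset.filter_congr
    intro u hu
    have hu1 : u ∉ s.1 := (Finset.mem_filter.1 hu).2.1
    have hv1 : v ∉ s.1 := hb.2 v List.mem_cons_self
    rw [graphOf_adj, graphOf_adj, h]
    · rcases min_choice v u with h | h <;> rw [h] <;> assumption
    · rcases max_choice v u with h | h <;> rw [h] <;> assumption

theorem Bad_congr {n : ℕ} (wn : Fin n → ℝ) (p : ℝ) (a : Fin n → ℝ)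
    (vord : Fin n → Fin n) (hv : Function.Injective vord) (K dev : ℝ) (k : ℕ) :
    ∀ (s : Finset (Fin n) × List (Fin n)) (M : ℝ) (ω ω' : Fin n → Fin n → Bool), validS s →
      (∀ i j, i ∉ s.1 → j ∉ s.1 → ω i j = ω' i j) →
      ω ∈ Bad wn p a vord K dev k s M → ω' ∈ Bad wn p a vord K dev k s M := by
  induction k with
  | zero => intro s M ω ω' _ _ h; exact h
  | succ k ih =>
    intro s M ω ω' hs hag h
    rcases h with h | h
    · exact Or.inl h
    · refine Or.inr ?_
      rw [ch_congr vord s hs ω ω' hag] at h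
      refine ih _ _ ω ω' (step_valid vord hv s hs _ (ch_sub_und _ _ _)) ?_ h
      intro i j hi hj
      exact hag i j (fun h => hi (step_sub _ _ _ h)) (fun h => hj (step_sub _ _ _ h))


theorem edge_inj {n : ℕ} (v : Fin n) :
    Function.Injective (fun u : Fin n => ((min v u, max v u) : Fin n × Fin n)) := by
  intro u u' h
  simp only [Prod.mk.injEq] at h
  obtain ⟨h1, h2⟩ := h
  rcases le_total v u with a | a <;> rcases le_total v u' with b | b <;>
    simp [a, b] at h1 h2 <;> omega

theorem edge_w {n : ℕ} (wn : Fin n → ℝ) (v u : Fin n) :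
    wn (min v u) * wn (max v u) = wn v * wn u := by
  rcases le_total v u with a | a <;> simp [a, mul_comm]

theorem mgf_bound {n : ℕ} {wn : Fin n → ℝ} (hw : ∀ i, 0 < wn i) {p : ℝ} (hp : 0 ≤ p)
    (a : Fin n → ℝ) (θ : ℝ) (ha : ∀ u, |θ * a u| ≤ 1) (v : Fin n) (U : Finset (Fin n))
    (hvU : v ∉ U) :
    ∫⁻ ω, ENNReal.ofReal (Real.exp (θ * ∑ u ∈ U.filter fun u => (graphOf ω).Adj v u, a u))
        ∂(graphMeasure n wn p) ≤
      ENNReal.ofReal (Real.exp (∑ u ∈ U, (θ * a u + (θ * a u)^2) *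
        (1 - Real.exp (-(wn v * wn u * p))))) := by
  set h : Fin n → Bool → ℝ≥0∞ := fun u b =>
    if b then ENNReal.ofReal (Real.exp (θ * a u)) else 1 with hh
  have e1 : ∀ ω : Fin n → Fin n → Bool,
      ENNReal.ofReal (Real.exp (θ * ∑ u ∈ U.filter fun u => (graphOf ω).Adj v u, a u)) =
      ∏ u ∈ U, h u (ω (min v u) (max v u)) := by
    intro ω
    rw [Finset.mul_sum, Real.exp_sum, ENNReal.ofReal_prod_of_nonneg fun _ _ => Real.exp_nonneg _,
      Finset.prod_filter]
    refine Finset.prod_congr rfl fun u hu => ?_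
    have hne : v ≠ u := fun e => hvU (e ▸ hu)
    simp [hh, graphOf_adj, hne]
  simp_rw [e1]
  have hind := ((graph_indep hw hp).precomp (edge_inj v)).comp h (fun i => measurable_of_finite _)
  have := ProbabilityTheory.lintegral_prod_eq_prod_lintegral_of_indepFun U _ hind
    (fun i => measurable_of_finite _)
  simp only [Function.comp_def] at this
  rw [this, Real.exp_sum, ENNReal.ofReal_prod_of_nonneg fun _ _ => Real.exp_nonneg _]
  refine Finset.prod_le_prod' fun u hu => ?_
  rw [graph_lintegral hw hp (min v u) (max v u) (h u), edge_w]
  have hz : 0 ≤ wn v * wn u * p := mul_nonneg (mul_pos (hw v) (hw u)).le hp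
  have h1 : 0 ≤ 1 - Real.exp (-(wn v * wn u * p)) := by
    have := Real.exp_le_one_iff.2 (neg_nonpos.2 hz); linarith
  simp only [hh, Bool.false_eq_true, if_false, if_true, mul_one]
  rw [← ENNReal.ofReal_mul h1, ← ENNReal.ofReal_add (Real.exp_nonneg _)
    (mul_nonneg h1 (Real.exp_nonneg _))]
  apply ENNReal.ofReal_le_ofReal
  have hb := (abs_le.1 (Real.abs_exp_sub_one_sub_id_le (ha u))).2
  set q := 1 - Real.exp (-(wn v * wn u * p)) with hq
  have h2 : Real.exp (-(wn v * wn u * p)) = 1 - q := by rw [hq]; ring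
  rw [h2]
  have h3 := Real.add_one_le_exp ((θ * a u + (θ * a u)^2) * q)
  nlinarith

theorem Bad_bound {n : ℕ} {wn : Fin n → ℝ} (hw : ∀ i, 0 < wn i) {p : ℝ} (hp : 0 ≤ p)
    (a : Fin n → ℝ) (θ : ℝ) (hθ : 0 ≤ θ) (ha : ∀ u, |θ * a u| ≤ 1)
    (κ : ℝ) (hκ : ∑ u, a u ^ 2 * (wn u * p) ≤ κ)
    (vord : Fin n → Fin n) (hv : Function.Injective vord) (K dev : ℝ) (k : ℕ) :
    ∀ (s : Finset (Fin n) × List (Fin n)) (M : ℝ), validS s →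
      graphMeasure n wn p (Bad wn p a vord K dev k s M) ≤
        ENNReal.ofReal (Real.exp (θ * (M - dev) + θ^2 * κ * (K - ∑ u ∈ s.1, wn u))) := by
  have hprob := graph_prob hw hp
  have hκ0 : 0 ≤ κ := le_trans
    (Finset.sum_nonneg fun u _ => mul_nonneg (sq_nonneg _) (mul_nonneg (hw u).le hp)) hκ
  have triv : ∀ (s : Finset (Fin n) × List (Fin n)) (M : ℝ) (X : Set (Fin n → Fin n → Bool)),
      dev ≤ M ∧ ∑ u ∈ s.1, wn u ≤ K → graphMeasure n wn p X ≤
      ENNReal.ofReal (Real.exp (θ * (M - dev) + θ^2 * κ * (K - ∑ u ∈ s.1, wn u))) := by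
    intro s M X h
    refine le_trans prob_le_one ?_
    rw [← ENNReal.ofReal_one]
    apply ENNReal.ofReal_le_ofReal
    apply Real.one_le_exp
    have h1 : 0 ≤ M - dev := by linarith [h.1]
    have h2 : 0 ≤ K - ∑ u ∈ s.1, wn u := by linarith [h.2]
    positivity
  induction k with
  | zero =>
    intro s M hs
    by_cases h : dev ≤ M ∧ ∑ u ∈ s.1, wn u ≤ K
    · exact triv s M _ h
    · have : Bad wn p a vord K dev 0 s M = ∅ := by
        ext ω; simp only [Bad, Set.mem_ofPred_eq, Set.mem_empty_iff_false, iff_false]; exact h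
      rw [this]; simp
  | succ k ih =>
    intro s M hs
    by_cases h : dev ≤ M ∧ ∑ u ∈ s.1, wn u ≤ K
    · exact triv s M _ h
    set μ := graphMeasure n wn p with hμ
    have hb := bq_valid vord s hs
    rcases hq : bq vord s with _ | ⟨v, rest⟩
    · have : Bad wn p a vord K dev (k+1) s M ⊆ Bad wn p a vord K dev k (s.1, []) M := by
        intro ω hω
        rcases hω with h' | h'
        · exact absurd h' h
        · simpa [stepR, ch, dr, hq] using h'
      refine le_trans (measure_mono this) (ih (s.1, []) M ?_)
      simp [validS]
    · rw [hq] at hb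
      have hvs : v ∉ s.1 := hb.2 v List.mem_cons_self
      have hvU : v ∉ und vord s := by simp [und, hq]
      have hstep1 : ∀ R, (stepR vord s R).1 = insert v s.1 := by intro R; simp [stepR, hq]
      set c0 : ℝ := θ * (M - dr wn p a vord s - dev) + θ^2 * κ * (K - (wn v + ∑ u ∈ s.1, wn u))
        with hc0
      have hsub : Bad wn p a vord K dev (k+1) s M ⊆
          ⋃ R ∈ (und vord s).powerset, ({ω | ch (graphOf ω) vord s = R} ∩
            Bad wn p a vord K dev k (stepR vord s R) (M + (∑ u ∈ R, a u - dr wn p a vord s))) := by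
        intro ω hω
        rcases hω with h' | h'
        · exact absurd h' h
        · simp only [Set.mem_iUnion]
          exact ⟨ch (graphOf ω) vord s, Finset.mem_powerset.2 (ch_sub_und _ _ _), rfl, h'⟩
      have hT : Disjoint (Finset.univ.image fun u : Fin n => ((min v u, max v u) : Fin n × Fin n))
          (Finset.univ.filter fun e : Fin n × Fin n =>
            e.1 ∉ insert v s.1 ∧ e.2 ∉ insert v s.1) := by
        rw [Finset.disjoint_left]
        intro e he he'
        obtain ⟨u, _, rfl⟩ := Finset.mem_image.1 he
        have := (Finset.mem_filter.1 he').2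
        rcases le_total v u with h | h <;> simp [h] at this
      calc μ (Bad wn p a vord K dev (k+1) s M)
          ≤ ∑ R ∈ (und vord s).powerset, μ ({ω | ch (graphOf ω) vord s = R} ∩
            Bad wn p a vord K dev k (stepR vord s R)
              (M + (∑ u ∈ R, a u - dr wn p a vord s))) :=
            le_trans (measure_mono hsub) (measure_biUnion_finset_le _ _)
        _ ≤ ∑ R ∈ (und vord s).powerset, ENNReal.ofReal (Real.exp (c0 + θ * ∑ u ∈ R, a u)) *
              μ {ω | ch (graphOf ω) vord s = R} := by
            refine Finset.sum_le_sum fun R hR => ?_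
            have hval := step_valid vord hv s hs R (Finset.mem_powerset.1 hR)
            rw [graph_inter hw hp _ _ hT, mul_comm]
            · gcongr
              refine (ih _ _ hval).trans (le_of_eq ?_)
              congr 2
              rw [hstep1, Finset.sum_insert hvs, hc0]
              ring
            · intro ω ω' hag hω
              simp only [Set.mem_ofPred_eq] at hω ⊢
              rw [← hω]
              simp only [ch, hq]
              apply Finset.filter_congr
              intro u _
              rw [graphOf_adj, graphOf_adj,
                hag (min v u, max v u) (Finset.mem_image.2 ⟨u, Finset.mem_univ _, rfl⟩)]
            · intro ω ω' hag hω
              refine Bad_congr wn p a vord hv K dev k _ _ ω ω' hval ?_ hω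
              intro i j hi hj
              rw [hstep1] at hi hj
              exact hag (i, j) (Finset.mem_filter.2 ⟨Finset.mem_univ _, hi, hj⟩)
        _ = ∑ R ∈ (und vord s).powerset, ∫⁻ ω in {ω | ch (graphOf ω) vord s = R},
              ENNReal.ofReal (Real.exp (c0 + θ * ∑ u ∈ ch (graphOf ω) vord s, a u)) ∂μ := by
            refine Finset.sum_congr rfl fun R hR => ?_
            rw [← setLIntegral_const]
            refine setLIntegral_congr_fun MeasurableSet.of_discrete ?_
            intro ω hω
            simp only [Set.mem_ofPred_eq] at hω
            simp only [hω]
        _ = ∫⁻ ω, ENNReal.ofReal (Real.exp (c0 + θ * ∑ u ∈ ch (graphOf ω) vord s, a u)) ∂μ := by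
            rw [← lintegral_biUnion_finset]
            · have : (⋃ R ∈ (und vord s).powerset, {ω | ch (graphOf ω) vord s = R}) = Set.univ := by
                ext ω
                simp only [Set.mem_iUnion, Set.mem_univ, iff_true]
                exact ⟨ch (graphOf ω) vord s, Finset.mem_powerset.2 (ch_sub_und _ _ _), rfl⟩
              rw [this, setLIntegral_univ]
            · intro R _ R' _ hne
              rw [Function.onFun, Set.disjoint_left]
              intro ω h1 h2
              exact hne (h1.symm.trans h2)
            · intro _ _; exact MeasurableSet.of_discrete
        _ = ENNReal.ofReal (Real.exp c0) * ∫⁻ ω, ENNReal.ofReal (Real.exp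
              (θ * ∑ u ∈ (und vord s).filter fun u => (graphOf ω).Adj v u, a u)) ∂μ := by
            rw [← lintegral_const_mul _ (measurable_of_finite _)]
            refine lintegral_congr fun ω => ?_
            rw [Real.exp_add, ENNReal.ofReal_mul (Real.exp_nonneg _)]
            simp only [ch, hq]
        _ ≤ ENNReal.ofReal (Real.exp c0) * ENNReal.ofReal (Real.exp (∑ u ∈ und vord s,
              (θ * a u + (θ * a u)^2) * (1 - Real.exp (-(wn v * wn u * p))))) := by
            gcongr
            exact mgf_bound hw hp a θ ha v _ hvU
        _ ≤ _ := by
            rw [← ENNReal.ofReal_mul (Real.exp_nonneg _), ← Real.exp_add]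
            apply ENNReal.ofReal_le_ofReal
            apply Real.exp_le_exp.2
            have hd : dr wn p a vord s =
              ∑ u ∈ und vord s, a u * (1 - Real.exp (-(wn v * wn u * p))) := by simp [dr, hq]
            have hsplit : ∑ u ∈ und vord s,
              (θ * a u + (θ * a u)^2) * (1 - Real.exp (-(wn v * wn u * p))) =
              θ * dr wn p a vord s + θ^2 * ∑ u ∈ und vord s,
                a u ^ 2 * (1 - Real.exp (-(wn v * wn u * p))) := by
              rw [hd, Finset.mul_sum, Finset.mul_sum, ← Finset.sum_add_distrib]
              refine Finset.sum_congr rfl fun u _ => ?_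
              ring
            have hle : ∑ u ∈ und vord s, a u ^ 2 * (1 - Real.exp (-(wn v * wn u * p))) ≤
                κ * wn v := by
              calc _ ≤ ∑ u ∈ und vord s, (a u ^ 2 * (wn u * p)) * wn v := by
                    refine Finset.sum_le_sum fun u _ => ?_
                    rw [mul_assoc (a u ^ 2)]
                    apply mul_le_mul_of_nonneg_left _ (sq_nonneg _)
                    have := Real.add_one_le_exp (-(wn v * wn u * p))
                    linarith
                _ ≤ ∑ u, (a u ^ 2 * (wn u * p)) * wn v :=
                    Finset.sum_le_sum_of_subset_of_nonneg (Finset.subset_univ _) fun u _ _ =>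
                      mul_nonneg (mul_nonneg (sq_nonneg _) (mul_nonneg (hw u).le hp)) (hw v).le
                _ ≤ _ := by
                    rw [← Finset.sum_mul]
                    exact mul_le_mul_of_nonneg_right hκ (hw v).le
            rw [hsplit, hc0]
            have := mul_le_mul_of_nonneg_left hle (sq_nonneg θ)
            linarith


theorem not_bad {n : ℕ} (wn : Fin n → ℝ) (p : ℝ) (a : Fin n → ℝ) (vord : Fin n → Fin n)
    (K dev : ℝ) (ω : Fin n → Fin n → Bool) (k : ℕ) : ∀ (j : ℕ) (M : ℝ),
    ω ∉ Bad wn p a vord K dev k (bfwQueue (graphOf ω) vord j) M → ∀ i ≤ k,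
    ∑ u ∈ (bfwQueue (graphOf ω) vord (j+i)).1, wn u ≤ K →
    M + ∑ l ∈ Finset.range i,
      (∑ u ∈ ch (graphOf ω) vord (bfwQueue (graphOf ω) vord (j+l)), a u
        - dr wn p a vord (bfwQueue (graphOf ω) vord (j+l))) < dev := by
  induction k with
  | zero =>
    intro j M h i hi hE
    have : i = 0 := by omega
    subst this
    by_contra hc
    exact h ⟨by simpa using hc, by simpa using hE⟩
  | succ k ih =>
    intro j M h i hi hE
    have h' : ¬ ((dev ≤ M ∧ ∑ u ∈ (bfwQueue (graphOf ω) vord j).1, wn u ≤ K) ∨ _) := h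
    push Not at h'
    rcases i with _ | i
    · by_contra hc
      have := h'.1 (by simpa using hc)
      simp only [add_zero] at hE
      linarith
    · have h2 := h'.2
      rw [← bfw_succ] at h2
      have := ih (j+1) _ h2 i (by omega) (by rw [show j + 1 + i = j + (i+1) by ring]; exact hE)
      rw [Finset.sum_range_succ']
      simp only [add_zero]
      have e : ∀ l, j + (l + 1) = j + 1 + l := fun l => by omega
      have e2 := Finset.sum_congr (rfl : Finset.range i = Finset.range i) fun l _ =>
        congrArg (fun t => ∑ u ∈ ch (graphOf ω) vord (bfwQueue (graphOf ω) vord t), a u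
          - dr wn p a vord (bfwQueue (graphOf ω) vord t)) (e l)
      rw [e2]
      linarith

section traj
variable {n : ℕ} (G : SimpleGraph (Fin n)) (vord : Fin n → Fin n)

/-- children discovered in step `k` -/
noncomputable def cl (k : ℕ) : Finset (Fin n) := ch G vord (bfwQueue G vord k)

/-- list of the children discovered in step `k` -/
noncomputable def chl (k : ℕ) : List (Fin n) :=
  (List.ofFn vord).filter fun u => decide (u ∈ cl G vord k)

theorem mem_chl_cl {k : ℕ} {u : Fin n} (h : u ∈ chl G vord k) : u ∈ cl G vord k := by
  simpa using (List.mem_filter.1 h).2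

theorem mem_chl (hv : Function.Bijective vord) {k : ℕ} {u : Fin n} :
    u ∈ chl G vord k ↔ u ∈ cl G vord k := by
  constructor
  · exact mem_chl_cl G vord
  · intro h
    refine List.mem_filter.2 ⟨?_, by simpa using h⟩
    rw [List.mem_ofFn]
    exact hv.2 u

theorem traj_nil {k : ℕ} (h : bq vord (bfwQueue G vord k) = []) :
    bfwQueue G vord (k+1) = ((bfwQueue G vord k).1, []) ∧ cl G vord k = ∅ := by
  rw [bfw_succ]
  simp [stepR, cl, ch, h]

theorem traj_cons {k : ℕ} {v : Fin n} {rest} (h : bq vord (bfwQueue G vord k) = v :: rest) :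
    bfwQueue G vord (k+1) = (insert v (bfwQueue G vord k).1, rest ++ chl G vord k) := by
  rw [bfw_succ]
  simp only [stepR, cl, h, chl]
  congr

theorem traj_valid (hv : Function.Injective vord) (k : ℕ) : validS (bfwQueue G vord k) := by
  induction k with
  | zero => simp [validS, bfwQueue]
  | succ k ih =>
    rw [bfw_succ]
    exact step_valid vord hv _ ih _ (ch_sub_und _ _ _)

theorem traj_card (k : ℕ) : (bfwQueue G vord k).1.card ≤ k := by
  induction k with
  | zero => simp [bfwQueue]
  | succ k ih =>
    rcases h : bq vord (bfwQueue G vord k) with _ | ⟨v, rest⟩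
    · rw [(traj_nil G vord h).1]; exact ih.trans (Nat.le_succ _)
    · rw [traj_cons G vord h]; exact (Finset.card_insert_le _ _).trans (by omega)

theorem traj_sub (k : ℕ) : (bfwQueue G vord k).1 ⊆ (bfwQueue G vord (k+1)).1 := by
  rw [bfw_succ]; exact step_sub _ _ _

theorem bq_ne {s : Finset (Fin n) × List (Fin n)} (h : s.2 ≠ []) : bq vord s = s.2 := by
  simp [bq, h]

/-- every child is discovered and remains discovered -/
theorem traj_disc (hv : Function.Bijective vord) (k : ℕ) : ∀ l < k, ∀ u ∈ cl G vord l,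
    u ∈ (bfwQueue G vord k).1 ∨ u ∈ (bfwQueue G vord k).2 := by
  induction k with
  | zero => intro l hl; omega
  | succ k ih =>
    intro l hl u hu
    rcases h : bq vord (bfwQueue G vord k) with _ | ⟨v, rest⟩
    · rw [(traj_nil G vord h).1]
      left
      have hlk : l ≠ k := by rintro rfl; rw [(traj_nil G vord h).2] at hu; simp at hu
      rcases ih l (by omega) u hu with h1 | h1
      · exact h1
      · have : (bfwQueue G vord k).2 ≠ [] := List.ne_nil_of_mem h1
        rw [← bq_ne vord this, h] at h1
        simp at h1
    · rw [traj_cons G vord h]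
      by_cases hlk : l = k
      · subst hlk
        right
        exact List.mem_append_right _ ((mem_chl G vord hv).2 hu)
      · rcases ih l (by omega) u hu with h1 | h1
        · left; exact Finset.mem_insert_of_mem h1
        · have : (bfwQueue G vord k).2 ≠ [] := List.ne_nil_of_mem h1
          rw [← bq_ne vord this, h] at h1
          rcases List.mem_cons.1 h1 with h1 | h1
          · left; simp [h1]
          · right; exact List.mem_append_left _ h1

theorem cl_disj (hv : Function.Bijective vord) {l k : ℕ} (hlk : l < k) :
    Disjoint (cl G vord l) (cl G vord k) := by
  rw [Finset.disjoint_left]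
  intro u hu hu'
  have h2 := (Finset.mem_filter.1 (ch_sub_und _ _ _ hu')).2
  rcases traj_disc G vord hv k l hlk u hu with h | h
  · exact h2.1 h
  · apply h2.2
    rw [bq_ne vord (List.ne_nil_of_mem h)]
    exact h

theorem cl_sum (hv : Function.Bijective vord) (k : ℕ) (T : Finset (Fin n))
    (hT : ∀ l < k, cl G vord l ⊆ T) : ∑ l ∈ Finset.range k, (cl G vord l).card ≤ T.card := by
  rw [← Finset.card_biUnion]
  · apply Finset.card_le_card
    intro u hu
    obtain ⟨l, hl, hu⟩ := Finset.mem_biUnion.1 hu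
    exact hT l (Finset.mem_range.1 hl) hu
  · intro l _ l' _ hne
    rcases lt_or_gt_of_ne hne with h | h
    · exact cl_disj G vord hv h
    · exact (cl_disj G vord hv h).symm

/-- FIFO structure of the queue -/
def QInv (k j i : ℕ) (rem : List (Fin n)) : Prop :=
  j ≤ i ∧ i < k ∧
  (bfwQueue G vord k).2 = rem ++ (List.range' (i+1) (k-(i+1))).flatMap (chl G vord) ∧
  (∀ u ∈ rem, u ∈ cl G vord i) ∧
  (∀ l < i, cl G vord l ⊆ (bfwQueue G vord k).1) ∧
  (∀ u ∈ cl G vord i, u ∈ (bfwQueue G vord k).1 ∨ u ∈ rem) ∧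
  (∀ u ∈ (bfwQueue G vord k).1, u ∈ (bfwQueue G vord (j+1)).1 ∨
    ∃ l, j ≤ l ∧ l ≤ i ∧ u ∈ cl G vord l)

theorem QInv_advance (hv : Function.Bijective vord) (k : ℕ) (hk : (bfwQueue G vord k).2 ≠ []) :
    ∀ (d j i : ℕ) (rem : List (Fin n)), k - i = d → QInv G vord k j i rem →
    ∃ i' rem', rem' ≠ [] ∧ QInv G vord k j i' rem' := by
  intro d
  induction d with
  | zero => intro j i rem h hI; have := hI.2.1; omega
  | succ d ih =>
    intro j i rem hd hI
    by_cases hr : rem = []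
    · subst hr
      obtain ⟨h1, h2, h3, h4, h5, h6, h7⟩ := hI
      have hik : i + 1 < k := by
        by_contra hc
        have : k - (i+1) = 0 := by omega
        rw [this] at h3
        simp at h3
        exact hk h3
      refine ih j (i+1) (chl G vord (i+1)) (by omega) ⟨by omega, hik, ?_, ?_, ?_, ?_, ?_⟩
      · rw [h3]
        obtain ⟨e, he⟩ : ∃ e, k - (i+1) = e + 1 := ⟨k - (i+1) - 1, by omega⟩
        rw [he, List.range'_succ, show k - (i+1+1) = e by omega]
        simp
      · intro u hu; exact mem_chl_cl G vord hu
      · intro l hl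
        rcases Nat.lt_succ_iff_lt_or_eq.1 hl with h | h
        · exact h5 l h
        · subst h
          intro u hu
          rcases h6 u hu with h | h
          · exact h
          · simp at h
      · intro u hu; right; exact (mem_chl G vord hv).2 hu
      · intro u hu
        rcases h7 u hu with h | ⟨l, a, b, c⟩
        · exact Or.inl h
        · exact Or.inr ⟨l, a, by omega, c⟩
    · exact ⟨i, rem, hr, hI⟩

theorem QInv_exists (hv : Function.Bijective vord) (k : ℕ) :
    ∃ j i rem, QInv G vord (k+1) j i rem := by
  induction k with
  | zero =>
    refine ⟨0, 0, chl G vord 0, le_rfl, by omega, ?_, ?_, ?_, ?_, ?_⟩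
    · rcases h : bq vord (bfwQueue G vord 0) with _ | ⟨v, rest⟩
      · rw [(traj_nil G vord h).1]
        simp [chl, (traj_nil G vord h).2]
      · rw [traj_cons G vord h]
        have : rest = [] := by
          have h' := h
          simp only [bq, bfwQueue, List.isEmpty_nil, if_true] at h'
          have := congrArg List.length h'
          rw [List.length_take, List.length_cons] at this
          exact List.eq_nil_of_length_eq_zero (by omega)
        simp [this]
    · intro u hu; exact mem_chl_cl G vord hu
    · intro l hl; omega
    · intro u hu; right; exact (mem_chl G vord hv).2 hu
    · intro u hu; left; exact hu
  | succ k ih =>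
    obtain ⟨j, i, rem, hI⟩ := ih
    by_cases hQ : (bfwQueue G vord (k+1)).2 = []
    · refine ⟨k+1, k+1, chl G vord (k+1), le_rfl, by omega, ?_, ?_, ?_, ?_, ?_⟩
      · rcases h : bq vord (bfwQueue G vord (k+1)) with _ | ⟨v, rest⟩
        · rw [(traj_nil G vord h).1]
          simp [chl, (traj_nil G vord h).2]
        · rw [traj_cons G vord h]
          have : rest = [] := by
            have h' := h
            simp only [bq, hQ, List.isEmpty_nil, if_true] at h'
            have := congrArg List.length h'
            rw [List.length_take, List.length_cons] at this
            exact List.eq_nil_of_length_eq_zero (by omega)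
          simp [this]
      · intro u hu; exact mem_chl_cl G vord hu
      · intro l hl u hu
        apply traj_sub
        rcases traj_disc G vord hv (k+1) l hl u hu with h | h
        · exact h
        · rw [hQ] at h; simp at h
      · intro u hu; right; exact (mem_chl G vord hv).2 hu
      · intro u hu; left; exact hu
    · obtain ⟨i, rem, hr, h1, h2, h3, h4, h5, h6, h7⟩ := QInv_advance G vord hv (k+1) hQ _ j i rem rfl hI
      obtain ⟨v, rem, rfl⟩ := List.exists_cons_of_ne_nil hr
      have hb : bq vord (bfwQueue G vord (k+1)) =
          v :: (rem ++ (List.range' (i+1) (k+1-(i+1))).flatMap (chl G vord)) := by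
        rw [bq_ne vord hQ, h3]; rfl
      refine ⟨j, i, rem, h1, by omega, ?_, ?_, ?_, ?_, ?_⟩
      · rw [traj_cons G vord hb]
        simp only
        rw [show k + 1 + 1 - (i+1) = (k + 1 - (i+1)) + 1 by omega, List.range'_concat]
        rw [List.flatMap_append, show i + 1 + 1 * (k + 1 - (i+1)) = k + 1 by omega]
        simp
      · intro u hu; exact h4 u (List.mem_cons_of_mem _ hu)
      · intro l hl; exact (h5 l hl).trans (traj_sub G vord _)
      · intro u hu
        rw [traj_cons G vord hb]
        rcases h6 u hu with h | h
        · left; exact Finset.mem_insert_of_mem h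
        · rcases List.mem_cons.1 h with h | h
          · left; simp [h]
          · right; exact h
      · intro u hu
        rw [traj_cons G vord hb] at hu
        rcases Finset.mem_insert.1 hu with h | h
        · right
          exact ⟨i, h1, le_rfl, h ▸ h4 v List.mem_cons_self⟩
        · exact h7 u h

theorem fifo (hv : Function.Bijective vord) (k : ℕ) : ∃ j i, j ≤ i ∧ i ≤ k ∧
    (bfwQueue G vord (k+1)).2.length ≤ ∑ l ∈ Finset.Ico i (k+1), (cl G vord l).card ∧
    ∑ l ∈ Finset.range i, (cl G vord l).card ≤ k + 1 ∧
    ∀ wn : Fin n → ℝ, (∀ u, 0 ≤ wn u) → ∑ u ∈ (bfwQueue G vord (k+1)).1, wn u ≤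
      ∑ u ∈ (bfwQueue G vord (j+1)).1, wn u +
        ∑ l ∈ Finset.Ico j (i+1), ∑ u ∈ cl G vord l, wn u := by
  obtain ⟨j, i, rem, h1, h2, h3, h4, h5, h6, h7⟩ := QInv_exists G vord hv k
  refine ⟨j, i, h1, by omega, ?_, ?_, ?_⟩
  · rw [← List.toFinset_card_of_nodup (traj_valid G vord hv.1 (k+1)).1]
    refine le_trans (Finset.card_le_card ?_) Finset.card_biUnion_le
    intro u hu
    rw [List.mem_toFinset, h3, List.mem_append] at hu
    rw [Finset.mem_biUnion]
    rcases hu with hu | hu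
    · exact ⟨i, by simp; omega, h4 u hu⟩
    · obtain ⟨l, hl, hu⟩ := List.mem_flatMap.1 hu
      rw [List.mem_range'_1] at hl
      exact ⟨l, by simp; omega, mem_chl_cl G vord hu⟩
  · exact (cl_sum G vord hv i _ h5).trans (traj_card G vord _)
  · intro wn hw
    calc _ ≤ ∑ u ∈ (bfwQueue G vord (j+1)).1 ∪ (Finset.Ico j (i+1)).biUnion (cl G vord), wn u := by
          refine Finset.sum_le_sum_of_subset_of_nonneg ?_ fun _ _ _ => hw _
          intro u hu
          rw [Finset.mem_union, Finset.mem_biUnion]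
          rcases h7 u hu with h | ⟨l, a, b, c⟩
          · exact Or.inl h
          · exact Or.inr ⟨l, by simp; omega, c⟩
      _ ≤ ∑ u ∈ (bfwQueue G vord (j+1)).1, wn u + ∑ u ∈ (Finset.Ico j (i+1)).biUnion (cl G vord), wn u := by
          rw [← Finset.sum_union_inter]
          exact le_add_of_nonneg_right (Finset.sum_nonneg fun _ _ => hw _)
      _ = _ := by
          rw [Finset.sum_biUnion]
          intro l _ l' _ hne
          rcases lt_or_gt_of_ne hne with h | h
          · exact cl_disj G vord hv h
          · exact (cl_disj G vord hv h).symm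

theorem queue_cl (k : ℕ) : ∀ u ∈ (bfwQueue G vord k).2, ∃ l < k, u ∈ cl G vord l := by
  induction k with
  | zero => simp [bfwQueue]
  | succ k ih =>
    intro u hu
    rcases h : bq vord (bfwQueue G vord k) with _ | ⟨v, rest⟩
    · rw [(traj_nil G vord h).1] at hu; simp at hu
    · rw [traj_cons G vord h] at hu
      rcases List.mem_append.1 hu with hu | hu
      · by_cases hQ : (bfwQueue G vord k).2 = []
        · simp only [bq, hQ, List.isEmpty_nil, if_true] at h
          have := congrArg List.length h
          rw [List.length_take, List.length_cons] at this
          have := List.eq_nil_of_length_eq_zero (l := rest) (by omega)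
          simp [this] at hu
        · rw [bq_ne vord hQ] at h
          obtain ⟨l, hl, hu⟩ := ih u (h ▸ List.mem_cons_of_mem _ hu)
          exact ⟨l, by omega, hu⟩
      · exact ⟨k, by omega, mem_chl_cl G vord hu⟩

/-- weight of the undiscovered vertices -/
theorem und_weight (wn : Fin n → ℝ) (hw : ∀ u, 0 ≤ wn u) (k : ℕ) :
    ∑ u, wn u - ∑ u ∈ (bfwQueue G vord (k+1)).1, wn u
      - ∑ l ∈ Finset.range k, ∑ u ∈ cl G vord l, wn u ≤
    ∑ u ∈ und vord (bfwQueue G vord k), wn u := by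
  have hsub : (Finset.univ : Finset (Fin n)) ⊆ und vord (bfwQueue G vord k) ∪
      ((bfwQueue G vord (k+1)).1 ∪ (Finset.range k).biUnion (cl G vord)) := by
    intro u _
    rw [Finset.mem_union, Finset.mem_union, Finset.mem_biUnion]
    by_cases h1 : u ∈ (bfwQueue G vord k).1
    · right; left; exact traj_sub G vord k h1
    by_cases h2 : u ∈ bq vord (bfwQueue G vord k)
    · right
      by_cases hQ : (bfwQueue G vord k).2 = []
      · left
        rcases h : bq vord (bfwQueue G vord k) with _ | ⟨v, rest⟩
        · rw [h] at h2; simp at h2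
        · rw [traj_cons G vord h]
          rw [h] at h2
          simp only [bq, hQ, List.isEmpty_nil, if_true] at h
          have := congrArg List.length h
          rw [List.length_take, List.length_cons] at this
          have := List.eq_nil_of_length_eq_zero (l := rest) (by omega)
          rw [this] at h2
          simp at h2
          simp [h2]
      · right
        rw [bq_ne vord hQ] at h2
        obtain ⟨l, hl, hu⟩ := queue_cl G vord k u h2
        exact ⟨l, Finset.mem_range.2 hl, hu⟩
    · left; simp [und, h1, h2]
  have un : ∀ A B : Finset (Fin n), ∑ u ∈ A ∪ B, wn u ≤ ∑ u ∈ A, wn u + ∑ u ∈ B, wn u := by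
    intro A B
    rw [← Finset.sum_union_inter]
    exact le_add_of_nonneg_right (Finset.sum_nonneg fun _ _ => hw _)
  have bu : ∀ T : Finset ℕ, ∑ u ∈ T.biUnion (cl G vord), wn u ≤ ∑ l ∈ T, ∑ u ∈ cl G vord l, wn u := by
    intro T
    induction T using Finset.induction_on with
    | empty => simp
    | insert a T ha ih =>
      rw [Finset.biUnion_insert, Finset.sum_insert ha]
      exact (un _ _).trans (by linarith)
  have h1 := Finset.sum_le_sum_of_subset_of_nonneg hsub (fun u _ _ => hw u)
  have h2 := un (und vord (bfwQueue G vord k))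
      ((bfwQueue G vord (k+1)).1 ∪ (Finset.range k).biUnion (cl G vord))
  have h3 := un ((bfwQueue G vord (k+1)).1) ((Finset.range k).biUnion (cl G vord))
  have h4 := bu (Finset.range k)
  linarith

theorem weight_succ (hv : Function.Injective vord) (wn : Fin n → ℝ) (k : ℕ) :
    ∑ u ∈ (bfwQueue G vord (k+1)).1, wn u =
      ∑ u ∈ (bfwQueue G vord k).1, wn u + xw wn vord (bfwQueue G vord k) := by
  rcases h : bq vord (bfwQueue G vord k) with _ | ⟨v, rest⟩
  · rw [(traj_nil G vord h).1]; simp [xw, h]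
  · rw [traj_cons G vord h]
    have := (bq_valid vord _ (traj_valid G vord hv k)).2 v (by rw [h]; exact List.mem_cons_self)
    simp only
    rw [Finset.sum_insert this]
    simp [xw, h, add_comm]

end traj


theorem abstract_bound (T g : ℝ) (hT : 0 < T) (hg : 0 < g) (hg1 : g ≤ 1/100) (m : ℕ)
    (hm : (m : ℝ) ≤ 4 * T) (e x c y d dy : ℕ → ℝ) (Q : ℕ → ℝ)
    (he0 : e 0 = 0) (hes : ∀ k, e (k+1) = e k + x k) (hx0 : ∀ k, 0 ≤ x k)
    (hx1 : ∀ k, x k ≤ g * T / 20)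
    (hd : ∀ k, d k ≤ (1 + g) * x k) (hdy : ∀ k, dy k ≤ (1 + 11/10 * g) * x k)
    (hlow : ∀ k, e (k+1) ≤ 10 * T → ∑ l ∈ Finset.range k, y l ≤ 12 * T → 9/10 * x k ≤ d k)
    (h1 : ∀ i ≤ m, e i ≤ 10 * T → ∑ l ∈ Finset.range i, (c l - d l) < g * T / 20)
    (h2 : ∀ i ≤ m, e i ≤ 10 * T → -(g * T / 20) < ∑ l ∈ Finset.range i, (c l - d l))
    (h3 : ∀ i ≤ m, e i ≤ 10 * T → ∑ l ∈ Finset.range i, (y l - dy l) < g * T / 20)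
    (h4 : ∀ i ≤ m, e i ≤ 10 * T → -(g * T / 20) < ∑ l ∈ Finset.range i, (y l - dy l))
    (hfifo : ∀ k, ∃ j i, j ≤ i ∧ i ≤ k ∧ Q (k+1) ≤ ∑ l ∈ Finset.Ico i (k+1), c l ∧
      ∑ l ∈ Finset.range i, c l ≤ (k + 1 : ℕ) ∧
      e (k+1) ≤ e (j+1) + ∑ l ∈ Finset.Ico j (i+1), y l) :
    ∀ k, k + 1 ≤ m → Q (k+1) < 10 * (g * T) := by
  have hgT : 0 < g * T := mul_pos hg hT
  have hgT' : g * T ≤ T / 100 := by nlinarith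
  have hmono : ∀ k, e k ≤ e (k+1) := fun k => by rw [hes]; linarith [hx0 k]
  have hmono' : Monotone e := monotone_nat_of_le_succ hmono
  have hsumx : ∀ a b, a ≤ b → ∑ l ∈ Finset.Ico a b, x l = e b - e a := by
    intro a b hab
    rw [← Finset.sum_Ico_sub e hab]
    exact Finset.sum_congr rfl fun l _ => by rw [hes]; ring
  have hsumd : ∀ a b, a ≤ b → ∑ l ∈ Finset.Ico a b, d l ≤ (1 + g) * (e b - e a) := by
    intro a b hab
    rw [← hsumx a b hab, Finset.mul_sum]
    exact Finset.sum_le_sum fun l _ => hd l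
  have hsumdy : ∀ a b, a ≤ b → ∑ l ∈ Finset.Ico a b, dy l ≤ (1 + 11/10 * g) * (e b - e a) := by
    intro a b hab
    rw [← hsumx a b hab, Finset.mul_sum]
    exact Finset.sum_le_sum fun l _ => hdy l
  -- upper deviations on intervals
  have hupc : ∀ a b, a ≤ b → b ≤ m → e b ≤ 10 * T →
      ∑ l ∈ Finset.Ico a b, c l ≤ (1 + g) * (e b - e a) + g * T / 10 := by
    intro a b hab hb heb
    have u1 := h1 b hb heb
    have u2 := h2 a (hab.trans hb) ((hmono' hab).trans heb)
    have u3 := Finset.sum_Ico_eq_sub (fun l => c l - d l) hab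
    rw [Finset.sum_sub_distrib] at u3
    have := hsumd a b hab
    linarith
  have hupy : ∀ a b, a ≤ b → b ≤ m → e b ≤ 10 * T →
      ∑ l ∈ Finset.Ico a b, y l ≤ (1 + 11/10 * g) * (e b - e a) + g * T / 10 := by
    intro a b hab hb heb
    have u1 := h3 b hb heb
    have u2 := h4 a (hab.trans hb) ((hmono' hab).trans heb)
    have u3 := Finset.sum_Ico_eq_sub (fun l => y l - dy l) hab
    rw [Finset.sum_sub_distrib] at u3
    have := hsumdy a b hab
    linarith
  have main : ∀ k, k + 1 ≤ m → (∀ k' ≤ k, e k' ≤ 10 * T) →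
      e (k+1) ≤ 10 * T ∧ Q (k+1) < 10 * (g * T) := by
    intro k hk ih
    obtain ⟨j, i, hji, hik, hQ, hC, hE⟩ := hfifo k
    have hei : e i ≤ 10 * T := ih i hik
    have hkm : ((k + 1 : ℕ) : ℝ) ≤ 4 * T := le_trans (by exact_mod_cast hk) hm
    have hdlow : 9/10 * e i ≤ ∑ l ∈ Finset.range i, d l := by
      have := hsumx 0 i (Nat.zero_le _)
      rw [he0, sub_zero, ← Finset.range_eq_Ico] at this
      rw [← this, Finset.mul_sum]
      refine Finset.sum_le_sum fun l hl => ?_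
      have hl := Finset.mem_range.1 hl
      apply hlow l (ih _ (by omega))
      have hy := hupy 0 l (Nat.zero_le _) (by omega) (ih l (by omega))
      rw [he0, sub_zero, ← Finset.range_eq_Ico] at hy
      have := ih l (by omega)
      nlinarith
    have hlowi := h2 i (by omega) hei
    rw [Finset.sum_sub_distrib] at hlowi
    have hei2 : e i ≤ 9/2 * T := by linarith
    have hei1 : e (i+1) ≤ 23/5 * T := by rw [hes]; linarith [hx1 i]
    have hej1 : e (j+1) ≤ e j + g * T / 20 := by rw [hes]; linarith [hx1 j]
    have hj0 : 0 ≤ e j := by rw [← he0]; exact hmono' (Nat.zero_le _)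
    have hy := hupy j (i+1) (by omega) (by omega) (by linarith)
    have hei1' : e (i+1) ≤ e i + g * T / 20 := by rw [hes]; linarith [hx1 i]
    have hgE : g * (e (i+1) - e j) ≤ 23/5 * (g * T) := by nlinarith
    have hek : e (k+1) ≤ e i + 27/5 * (g * T) := by linarith
    have hek' : e (k+1) ≤ 10 * T := by linarith
    refine ⟨hek', ?_⟩
    have hc := hupc i (k+1) (by omega) hk hek'
    have : g * (e (k+1) - e i) ≤ g * (27/5 * (g * T)) := by
      apply mul_le_mul_of_nonneg_left _ hg.le; linarith
    have : g * (27/5 * (g * T)) ≤ g * T := by nlinarith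
    linarith
  have all : ∀ k, k ≤ m → e k ≤ 10 * T := by
    intro k
    induction k using Nat.strong_induction_on with
    | _ k ih =>
      intro hk
      rcases k with _ | k
      · rw [he0]; linarith
      · exact (main k hk fun k' hk' => ih k' (by omega) (by omega)).1
  intro k hk
  exact (main k hk fun k' hk' => all k' (by omega)).2

theorem det_bound {n : ℕ} {wn : Fin n → ℝ} (hw : ∀ i, 0 < wn i) {p : ℝ} (hp : 0 ≤ p)
    (vord : Fin n → Fin n) (hv : Function.Bijective vord) (ω : Fin n → Fin n → Bool)
    (T g : ℝ) (hT : 0 < T) (hg : 0 < g) (hg1 : g ≤ 1/100) (m : ℕ) (hm : (m : ℝ) ≤ 4 * T)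
    (hmax : ∀ u, wn u ≤ g * T / 20)
    (hpl : p * ∑ u, wn u ≤ 1 + g) (hpl1 : 1 ≤ p * ∑ u, wn u)
    (hp2 : p * ∑ u, wn u ^ 2 ≤ 1 + 11/10 * g)
    (hsm : ∀ u v, wn u * wn v * p ≤ 1/20) (hpT : p * (25 * T) ≤ 1/20)
    (b1 : ω ∉ Bad wn p (fun _ => 1) vord (10 * T) (g * T / 20) m (∅, []) 0)
    (b2 : ω ∉ Bad wn p (fun _ => -1) vord (10 * T) (g * T / 20) m (∅, []) 0)
    (b3 : ω ∉ Bad wn p wn vord (10 * T) (g * T / 20) m (∅, []) 0)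
    (b4 : ω ∉ Bad wn p (fun u => - wn u) vord (10 * T) (g * T / 20) m (∅, []) 0) :
    ∀ k, k + 1 ≤ m → ((bfwQueue (graphOf ω) vord (k+1)).2.length : ℝ) < 10 * (g * T) := by
  set st := bfwQueue (graphOf ω) vord with hst
  have drneg : ∀ (a : Fin n → ℝ) s, dr wn p (fun u => - a u) vord s = - dr wn p a vord s := by
    intro a s
    unfold dr
    split
    · simp
    · simp [Finset.sum_neg_distrib]
  have hup : ∀ (a : Fin n → ℝ), (∀ u, 0 ≤ a u) → ∀ s,
      dr wn p a vord s ≤ (p * ∑ u, a u * wn u) * xw wn vord s := by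
    intro a ha s
    unfold dr xw
    rcases bq vord s with _ | ⟨v, rest⟩
    · simp
    · simp only
      calc _ ≤ ∑ u ∈ und vord s, a u * (wn v * wn u * p) := by
            refine Finset.sum_le_sum fun u _ => ?_
            apply mul_le_mul_of_nonneg_left _ (ha u)
            have := Real.add_one_le_exp (-(wn v * wn u * p))
            linarith
        _ ≤ ∑ u, a u * (wn v * wn u * p) :=
            Finset.sum_le_sum_of_subset_of_nonneg (Finset.subset_univ _) fun u _ _ =>
              mul_nonneg (ha u) (mul_nonneg (mul_pos (hw v) (hw u)).le hp)
        _ = _ := by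
            rw [mul_assoc, Finset.sum_mul, Finset.mul_sum]
            exact Finset.sum_congr rfl fun u _ => by ring
  have hx0 : ∀ s, 0 ≤ xw wn vord s := by
    intro s; unfold xw; split
    · exact le_rfl
    · exact (hw _).le
  have nb : ∀ a : Fin n → ℝ, ω ∉ Bad wn p a vord (10 * T) (g * T / 20) m (∅, []) 0 →
      ∀ i ≤ m, ∑ u ∈ (st i).1, wn u ≤ 10 * T →
      ∑ l ∈ Finset.range i, (∑ u ∈ cl (graphOf ω) vord l, a u - dr wn p a vord (st l))
        < g * T / 20 := by
    intro a hb i hi hE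
    have := not_bad wn p a vord (10 * T) (g * T / 20) ω m 0 0 hb i hi
      (by rw [zero_add]; exact hE)
    simp only [zero_add] at this
    exact this
  refine abstract_bound T g hT hg hg1 m hm (fun k => ∑ u ∈ (st k).1, wn u)
    (fun k => xw wn vord (st k)) (fun k => ∑ u ∈ cl (graphOf ω) vord k, (1:ℝ))
    (fun k => ∑ u ∈ cl (graphOf ω) vord k, wn u) (fun k => dr wn p (fun _ => 1) vord (st k))
    (fun k => dr wn p wn vord (st k)) (fun k => ((st k).2.length : ℝ))
    ?_ ?_ ?_ ?_ ?_ ?_ ?_ ?_ ?_ ?_ ?_ ?_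
  · simp [hst, bfwQueue]
  · intro k; exact weight_succ _ vord hv.1 wn k
  · intro k; exact hx0 _
  · intro k
    simp only [xw]
    split
    · positivity
    · exact hmax _
  · intro k
    refine (hup _ (fun _ => zero_le_one) _).trans ?_
    apply mul_le_mul_of_nonneg_right _ (hx0 _)
    simpa using hpl
  · intro k
    refine (hup _ (fun u => (hw u).le) _).trans ?_
    apply mul_le_mul_of_nonneg_right _ (hx0 _)
    simpa [sq] using hp2
  · intro k hk hy
    have hund := und_weight (graphOf ω) vord wn (fun u => (hw u).le) k
    simp only [dr, xw]
    change ∑ u, wn u - ∑ u ∈ (st (k+1)).1, wn u - _ ≤ ∑ u ∈ und vord (st k), wn u at hund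
    rcases bq vord (st k) with _ | ⟨v, rest⟩
    · simp
    · simp only [one_mul]
      have hb : 19/20 * wn v * p * ∑ u ∈ und vord (st k), wn u ≤
          ∑ u ∈ und vord (st k), (1 - Real.exp (-(wn v * wn u * p))) := by
        rw [Finset.mul_sum]
        refine Finset.sum_le_sum fun u _ => ?_
        have hz0 : 0 ≤ wn v * wn u * p := mul_nonneg (mul_pos (hw v) (hw u)).le hp
        have hz1 := hsm v u
        have := (abs_le.1 (Real.abs_exp_sub_one_sub_id_le (x := -(wn v * wn u * p))
          (by rw [abs_neg, abs_of_nonneg hz0]; linarith))).2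
        nlinarith
      refine le_trans ?_ hb
      have h25 : ∑ u, wn u - 25 * T ≤ ∑ u ∈ und vord (st k), wn u := by linarith
      have := mul_le_mul_of_nonneg_left h25 hp
      have h3 : 19/20 ≤ p * ∑ u ∈ und vord (st k), wn u := by linarith
      nlinarith [hw v]
  · exact nb _ b1
  · intro i hi hE
    have := nb _ b2 i hi hE
    simp only [drneg (fun _ => 1), Finset.sum_neg_distrib] at this
    have e : ∀ l, -(∑ u ∈ cl (graphOf ω) vord l, (1:ℝ)) - -dr wn p (fun _ => 1) vord (st l) =
      -((∑ u ∈ cl (graphOf ω) vord l, (1:ℝ)) - dr wn p (fun _ => 1) vord (st l)) := fun l => by ring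
    rw [Finset.sum_congr rfl fun l _ => e l, Finset.sum_neg_distrib] at this
    linarith
  · exact nb _ b3
  · intro i hi hE
    have := nb _ b4 i hi hE
    simp only [drneg, Finset.sum_neg_distrib] at this
    have e : ∀ l, -(∑ u ∈ cl (graphOf ω) vord l, wn u) - -dr wn p wn vord (st l) =
      -((∑ u ∈ cl (graphOf ω) vord l, wn u) - dr wn p wn vord (st l)) := fun l => by ring
    rw [Finset.sum_congr rfl fun l _ => e l, Finset.sum_neg_distrib] at this
    linarith
  · intro k
    obtain ⟨j, i, h1, h2, h3, h4, h5⟩ := fifo (graphOf ω) vord hv k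
    refine ⟨j, i, h1, h2, ?_, ?_, h5 wn fun u => (hw u).le⟩
    · simp only [Finset.sum_const, nsmul_eq_mul, mul_one]
      exact_mod_cast h3
    · simp only [Finset.sum_const, nsmul_eq_mul, mul_one]
      exact_mod_cast h4


theorem one_n {n : ℕ} {wn : Fin n → ℝ} (hw : ∀ i, 0 < wn i) (C r f : ℝ) (hC : 0 < C)
    (hr : 1 ≤ r) (hf1 : 1 ≤ f) (hF : 400 * (C + 1) + 20 * C ≤ f)
    (hl : ∑ u, wn u = r ^ 3) (hg1 : f ≤ r / 100) (hg2 : f ≤ C / 600 * r)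
    (h2 : ∑ u, wn u ^ 2 ≤ r ^ 3 + r ^ 2 / 100) (h3 : ∑ u, wn u ^ 3 ≤ (C + 1) * r ^ 3)
    (hx1 : ∀ u, wn u ≤ r / (20 * C)) (hx2 : ∀ u, wn u ≤ r / 10)
    (m : ℕ) (hm : (m : ℝ) ≤ 4 * f * r ^ 2 / C) (σ : Equiv.Perm (Fin n)) :
    graphMeasure n wn ((r + f) / r ^ 4)
      {ω | ∃ i : ℕ, 1 ≤ i ∧ i ≤ m ∧ 10 * f ^ 2 * r / C ≤ (Lproc (graphOf ω) σ i : ℝ)}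
      ≤ ENNReal.ofReal (4 * Real.exp (- f / 4)) := by
  have hr0 : 0 < r := by linarith
  have hf0 : 0 < f := by linarith
  set p := (r + f) / r ^ 4 with hpdef
  set g := f / r with hgdef
  set T := f * r ^ 2 / C with hTdef
  have hp : 0 ≤ p := by positivity
  have hT : 0 < T := by positivity
  have hg : 0 < g := by positivity
  have hg1' : g ≤ 1/100 := by rw [hgdef, div_le_iff₀ hr0]; linarith
  have hgT : g * T = f ^ 2 * r / C := by rw [hgdef, hTdef]; field_simp
  have hp' : p = (1 + g) / r ^ 3 := by rw [hpdef, hgdef]; field_simp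
  have hpl : p * ∑ u, wn u = 1 + g := by rw [hl, hp']; field_simp
  have hp2 : p * ∑ u, wn u ^ 2 ≤ 1 + 11/10 * g := by
    calc p * ∑ u, wn u ^ 2 ≤ p * (r ^ 3 + r ^ 2 / 100) := mul_le_mul_of_nonneg_left h2 hp
      _ = (1 + g) * (1 + (1 / r) / 100) := by rw [hp']; field_simp
      _ ≤ (1 + g) * (1 + g / 100) := by
          have : 1 / r ≤ g := by rw [hgdef]; gcongr
          gcongr
      _ ≤ _ := by nlinarith
  have hp3 : p * ∑ u, wn u ^ 3 ≤ 2 * (C + 1) := by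
    calc p * ∑ u, wn u ^ 3 ≤ p * ((C + 1) * r ^ 3) := mul_le_mul_of_nonneg_left h3 hp
      _ = (1 + g) * (C + 1) := by rw [hp']; field_simp
      _ ≤ _ := by nlinarith
  have hfC : 20 * C ≤ f := by linarith
  have hmax : ∀ u, wn u ≤ g * T / 20 := by
    intro u
    refine (hx1 u).trans ?_
    rw [hgT]
    calc r / (20 * C) = 1 ^ 2 * r / C / 20 := by field_simp
      _ ≤ _ := by gcongr
  have hsm : ∀ u v, wn u * wn v * p ≤ 1/20 := by
    intro u v
    calc wn u * wn v * p ≤ (r / 10) * (r / 10) * p := by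
          have := hx2 u
          have := hx2 v
          have := (hw u).le
          have := (hw v).le
          gcongr
      _ = (1 + g) / 100 * (1 / r) := by rw [hp']; field_simp; norm_num
      _ ≤ (1 + g) / 100 * 1 := by
          have : 1 / r ≤ 1 := by rw [div_le_one hr0]; exact hr
          gcongr
      _ ≤ _ := by linarith
  have hpT : p * (25 * T) ≤ 1/20 := by
    have e : p * (25 * T) = 25 * (1 + g) * (f / (C * r)) := by
      rw [hp', hTdef]; field_simp
    have h1 : f / (C * r) ≤ 1 / 600 := by
      rw [div_le_iff₀ (by positivity)]; linarith
    rw [e]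
    have h0 : 0 ≤ f / (C * r) := by positivity
    nlinarith
  have hm' : (m : ℝ) ≤ 4 * T := by rw [hTdef]; convert hm using 1; ring
  have hbig : 1 < 10 * (g * T) := by
    rw [hgT]
    have : 1 < f ^ 2 * r / C := by
      rw [lt_div_iff₀ hC]
      nlinarith [mul_le_mul hf1 hr zero_le_one hf0.le, mul_pos hf0 hr0]
    linarith
  have key : ∀ a : Fin n → ℝ, (∀ u, |1 / r * a u| ≤ 1) →
      ∑ u, a u ^ 2 * (wn u * p) ≤ 2 * (C + 1) →
      graphMeasure n wn p (Bad wn p a σ (10 * T) (g * T / 20) m (∅, []) 0)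
        ≤ ENNReal.ofReal (Real.exp (- f / 4)) := by
    intro a ha hκ
    refine (Bad_bound hw hp a (1 / r) (by positivity) ha (2 * (C + 1)) hκ σ σ.injective
      (10 * T) (g * T / 20) m (∅, []) 0 (by simp [validS])).trans ?_
    apply ENNReal.ofReal_le_ofReal
    apply Real.exp_le_exp.2
    rw [Finset.sum_empty, hgT, hTdef]
    have e : 1 / r * (0 - f ^ 2 * r / C / 20) +
        (1 / r) ^ 2 * (2 * (C + 1)) * (10 * (f * r ^ 2 / C) - 0)
        = f * ((400 * (C + 1) - f) / (20 * C)) := by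
      field_simp; ring
    rw [e]
    have h1 : (400 * (C + 1) - f) / (20 * C) ≤ -1 := by
      rw [div_le_iff₀ (by positivity)]; linarith
    nlinarith
  have hr1 : 1 / r ≤ 1 := by rw [div_le_one hr0]; exact hr
  have hκ1 : ∑ u, (1:ℝ) ^ 2 * (wn u * p) ≤ 2 * (C + 1) := by
    rw [← Finset.mul_sum, ← Finset.sum_mul, mul_comm _ p, hpl]; linarith
  have hκ3 : ∑ u, wn u ^ 2 * (wn u * p) ≤ 2 * (C + 1) := by
    refine le_trans (le_of_eq ?_) hp3
    rw [Finset.mul_sum]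
    exact Finset.sum_congr rfl fun u _ => by ring
  have hθ1 : |1 / r * 1| ≤ 1 := by rw [mul_one, abs_of_pos (by positivity)]; exact hr1
  have hθ3 : ∀ u, |1 / r * wn u| ≤ 1 := by
    intro u
    rw [abs_of_pos (mul_pos (by positivity) (hw u)), one_div, inv_mul_le_iff₀ hr0]
    have := hx2 u
    linarith
  have k1 := key (fun _ => 1) (fun _ => hθ1) hκ1
  have k2 := key (fun _ => -1) (fun _ => by simpa using hθ1) (by simpa using hκ1)
  have k3 := key wn hθ3 hκ3
  have k4 := key (fun u => - wn u) (fun u => by simpa using hθ3 u) (by simpa using hκ3)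
  have sub : {ω | ∃ i : ℕ, 1 ≤ i ∧ i ≤ m ∧ 10 * f ^ 2 * r / C ≤ (Lproc (graphOf ω) σ i : ℝ)} ⊆
      ((Bad wn p (fun _ => 1) σ (10 * T) (g * T / 20) m (∅, []) 0 ∪
       Bad wn p (fun _ => -1) σ (10 * T) (g * T / 20) m (∅, []) 0) ∪
       Bad wn p wn σ (10 * T) (g * T / 20) m (∅, []) 0) ∪
       Bad wn p (fun u => - wn u) σ (10 * T) (g * T / 20) m (∅, []) 0 := by
    rintro ω ⟨i, hi1, him, hL⟩
    by_contra hcon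
    simp only [Set.mem_union, not_or] at hcon
    obtain ⟨⟨⟨b1, b2⟩, b3⟩, b4⟩ := hcon
    obtain ⟨k, rfl⟩ : ∃ k, i = k + 1 := ⟨i - 1, by omega⟩
    have := det_bound hw hp σ σ.bijective ω T g hT hg hg1' m hm' hmax hpl.le
      (by rw [hpl]; linarith) hp2 hsm hpT b1 b2 b3 b4 k him
    have e : 10 * f ^ 2 * r / C = 10 * (g * T) := by rw [hgT]; ring
    rw [e] at hL
    unfold Lproc at hL
    push_cast at hL
    rcases le_max_iff.1 hL with h | h <;> linarith
  refine (measure_mono sub).trans ?_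
  refine (measure_union_le _ _).trans ?_
  refine (add_le_add ((measure_union_le _ _).trans (add_le_add ((measure_union_le _ _).trans
    (add_le_add k1 k2)) k3)) k4).trans ?_
  rw [← ENNReal.ofReal_add (by positivity) (by positivity),
    ← ENNReal.ofReal_add (by positivity) (by positivity),
    ← ENNReal.ofReal_add (by positivity) (by positivity)]
  apply ENNReal.ofReal_le_ofReal
  linarith

theorem mu_pos {w : ∀ n : ℕ, Fin n → ℝ} {μ : Measure ℝ} (hC : CondC w μ) :
    0 < ∫ x, x ∂μ ∧ 0 < ∫ x, x ^ 3 ∂μ := by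
  have := hC.isProb
  have hId : Integrable (fun x : ℝ => x) μ := by
    refine Integrable.mono' ((integrable_const (1:ℝ)).add hC.int3.norm)
      measurable_id.aestronglyMeasurable ?_
    refine Eventually.of_forall fun x => ?_
    simp only [Pi.add_apply, Real.norm_eq_abs, abs_pow]
    have h0 := abs_nonneg x
    rcases le_total |x| 1 with h | h
    · have : 0 ≤ |x| ^ 3 := by positivity
      linarith
    · have : |x| ≤ |x| ^ 3 := le_self_pow₀ h (by norm_num)
      linarith
  constructor
  · have h0 : 0 ≤ᵐ[μ] fun x : ℝ => x := hC.pos.mono fun x hx => le_of_lt hx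
    rw [integral_pos_iff_support_of_nonneg_ae h0 hId]
    rw [pos_iff_ne_zero]
    intro hz
    have : ∀ᵐ x ∂μ, x ∉ Function.support (fun x : ℝ => x) := measure_eq_zero_iff_ae_notMem.1 hz
    have hF : ∀ᵐ x ∂μ, False := by
      filter_upwards [this, hC.pos] with x h1 h2
      exact h1 (by simpa using h2.ne')
    simp only [eventually_const] at hF
  · have h0 : 0 ≤ᵐ[μ] fun x : ℝ => x ^ 3 := hC.pos.mono fun x hx => le_of_lt (pow_pos hx 3)
    rw [integral_pos_iff_support_of_nonneg_ae h0 hC.int3]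
    rw [pos_iff_ne_zero]
    intro hz
    have : ∀ᵐ x ∂μ, x ∉ Function.support (fun x : ℝ => x ^ 3) :=
      measure_eq_zero_iff_ae_notMem.1 hz
    have hF : ∀ᵐ x ∂μ, False := by
      filter_upwards [this, hC.pos] with x h1 h2
      exact h1 (by simpa using h2.ne')
    simp only [eventually_const] at hF

set_option maxHeartbeats 2000000 in
theorem final
    (w : ∀ n : ℕ, Fin n → ℝ) (μ : Measure ℝ) (hC : CondC w μ)
    (f : ℕ → ℝ) (hf : f =o[atTop] fun n : ℕ => (n : ℝ) ^ ((1 : ℝ) / 3))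
    (m : ℕ → ℕ)
    (hm : ∀ n, f n * ell w n ^ ((2 : ℝ) / 3) / Cconst μ ≤ (m n : ℝ) ∧
      (m n : ℝ) ≤ 4 * f n * ell w n ^ ((2 : ℝ) / 3) / Cconst μ) :
    ∃ A > (0 : ℝ), ∃ F : ℝ, ∀ᶠ n : ℕ in atTop, F ≤ f n →
      expMeasure' n (w n) (pf w f n)
        {ω : (Fin n → Fin n → Bool) × (Fin n → Fin n) |
          ∃ i : ℕ, 1 ≤ i ∧ i ≤ m n ∧
            10 * f n ^ 2 * ell w n ^ ((1 : ℝ) / 3) / Cconst μ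
              ≤ (Lproc (graphOf ω.1) ω.2 i : ℝ)}
      ≤ ENNReal.ofReal (A * Real.exp (-f n / A)) := by
  obtain ⟨hE, hE3⟩ := mu_pos hC
  set E := ∫ x, x ∂μ with hEdef
  set E3 := ∫ x, x ^ 3 ∂μ with hE3def
  have hCeq : Cconst μ = E3 / E := rfl
  have hC0 : 0 < Cconst μ := by rw [hCeq]; positivity
  set C := Cconst μ with hCdef
  refine ⟨4, by norm_num, 1 + (400 * (C + 1) + 20 * C), ?_⟩
  have hs : Tendsto (fun n : ℕ => (n : ℝ) ^ ((1 : ℝ) / 3)) atTop atTop :=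
    (tendsto_rpow_atTop (by norm_num)).comp tendsto_natCast_atTop_atTop
  obtain ⟨d, hd0, hd⟩ : ∃ d : ℝ, 0 < d ∧ d ^ 3 = E / 2 :=
    ⟨(E / 2) ^ ((1:ℝ)/3), by positivity, by
      rw [← Real.rpow_natCast, ← Real.rpow_mul (by positivity)]; norm_num⟩
  set ε := min (min (1/100) (C / 600)) (min (1 / (20 * C)) (1/10)) with hε
  have hε0 : 0 < ε := by positivity
  have a1 := hf.def (c := ε * d) (by positivity)
  have a2 := hC.ell_asymp.def (c := min (E / 2) (d ^ 2 / 200)) (by positivity)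
  have a3 := hC.sq_asymp.def (c := d ^ 2 / 200) (by positivity)
  have a4 := hC.cube_asymp.def (c := 1) (by norm_num)
  have a5 := hC.max_asymp.def (c := ε * d) (by positivity)
  have a6 := hs.eventually_ge_atTop (max 1 (max (1 / d) ((2 + E3 + C * E)/ d ^ 3)))
  have a2' := hC.ell_asymp.def (c := E3 * 0 + min (E / 2) (d ^ 3 / (2 * (C + 1)))) (by positivity)
  filter_upwards [a1, a2, a3, a4, a5, a6, a2'] with n b1 b2 b3 b4 b5 b6 b7 hF
  set s := (n : ℝ) ^ ((1 : ℝ) / 3) with hsdef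
  have hn0 : (0:ℝ) ≤ n := Nat.cast_nonneg n
  have hs3 : (n : ℝ) = s ^ 3 := by
    rw [hsdef, ← Real.rpow_natCast, ← Real.rpow_mul hn0]; norm_num
  have hs2 : (n : ℝ) ^ ((2 : ℝ) / 3) = s ^ 2 := by
    rw [hsdef, ← Real.rpow_natCast, ← Real.rpow_mul hn0]; norm_num
  have hs1 : 1 ≤ s := (le_max_left _ _).trans b6
  have hsd : 1 / d ≤ s := (le_max_left _ _).trans ((le_max_right _ _).trans b6)
  have hs0 : 0 < s := by linarith
  rw [hs2, Real.norm_eq_abs, Real.norm_eq_abs, abs_of_pos (by positivity : 0 < s ^ 2)] at b2 b3 b7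
  rw [hs3] at b2 b3 b4 b7
  simp only [Real.norm_eq_abs, abs_one, mul_one] at b1 b4 b5
  rw [abs_of_pos hs0] at b1 b5
  rw [hC.moment_eq] at b3
  change |_ - E * _| ≤ _ at b3
  have hs23 : s ^ 2 ≤ s ^ 3 := pow_le_pow_right₀ hs1 (by norm_num)
  have b2a : |ell w n - E * s ^ 3| ≤ E / 2 * s ^ 2 :=
    b2.trans (mul_le_mul_of_nonneg_right (min_le_left _ _) (by positivity))
  have b2b : |ell w n - E * s ^ 3| ≤ d ^ 2 / 200 * s ^ 2 :=
    b2.trans (mul_le_mul_of_nonneg_right (min_le_right _ _) (by positivity))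
  rw [abs_le] at b2a b2b b3 b4
  have hlow : E / 2 * s ^ 3 ≤ ell w n := by nlinarith
  have hell0 : 0 < ell w n := lt_of_lt_of_le (by positivity) hlow
  set r := ell w n ^ ((1 : ℝ) / 3) with hrdef
  have hr0 : 0 < r := by positivity
  have hr3 : ell w n = r ^ 3 := by
    rw [hrdef, ← Real.rpow_natCast, ← Real.rpow_mul hell0.le]; norm_num
  have hr2 : ell w n ^ ((2 : ℝ) / 3) = r ^ 2 := by
    rw [hrdef, ← Real.rpow_natCast, ← Real.rpow_mul hell0.le]; norm_num
  have hr4 : ell w n ^ ((4 : ℝ) / 3) = r ^ 4 := by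
    rw [hrdef, ← Real.rpow_natCast, ← Real.rpow_mul hell0.le]; norm_num
  have hrs : d * s ≤ r := by
    refine le_of_pow_le_pow_left₀ (n := 3) (by norm_num) hr0.le ?_
    rw [mul_pow, hd, ← hr3]; exact hlow
  have hr1 : 1 ≤ r := by
    refine le_trans ?_ hrs
    rw [div_le_iff₀ hd0] at hsd; linarith
  have hεr : ε * d * s ≤ ε * r := by
    rw [mul_assoc]; exact mul_le_mul_of_nonneg_left hrs hε0.le
  have hfr : f n ≤ ε * r := (le_abs_self _).trans (b1.trans hεr)
  have hmaxr : ∀ u, w n u ≤ ε * r := by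
    intro u
    have h1 : w n u ≤ ⨆ i, w n i := le_ciSup (f := w n) (Set.finite_range _).bddAbove u
    exact h1.trans ((le_abs_self _).trans (b5.trans hεr))
  have e1 : ε ≤ 1/100 := (min_le_left _ _).trans (min_le_left _ _)
  have e2 : ε ≤ C/600 := (min_le_left _ _).trans (min_le_right _ _)
  have e3 : ε ≤ 1/(20*C) := (min_le_right _ _).trans (min_le_left _ _)
  have e4 : ε ≤ 1/10 := (min_le_right _ _).trans (min_le_right _ _)
  have hds2 : d ^ 2 * s ^ 2 ≤ r ^ 2 := by
    rw [← mul_pow]; exact pow_le_pow_left₀ (by positivity) hrs 2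
  have h2 : ∑ u, w n u ^ 2 ≤ r ^ 3 + r ^ 2 / 100 := by
    rw [← hr3]; linarith [b3.2, b2b.1]
  have h3 : ∑ u, w n u ^ 3 ≤ (C + 1) * r ^ 3 := by
    have b7a : |ell w n - E * s ^ 3| ≤ d ^ 3 / (2 * (C + 1)) * s ^ 2 := by
      refine b7.trans (mul_le_mul_of_nonneg_right ?_ (by positivity))
      rw [mul_zero, zero_add]; exact min_le_right _ _
    rw [abs_le] at b7a
    have hCE : C * E = E3 := by rw [hCeq]; field_simp
    have t1 : (C + 1) * (ell w n - E * s ^ 3) ≥ - (d ^ 3 / 2 * s ^ 2) := by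
      have := mul_le_mul_of_nonneg_left b7a.1 (by linarith : 0 ≤ C + 1)
      have e : (C + 1) * -(d ^ 3 / (2 * (C + 1)) * s ^ 2) = - (d ^ 3 / 2 * s ^ 2) := by field_simp
      linarith
    have t2 : (2 + E3 + C * E) / d ^ 3 ≤ s :=
      (le_max_right _ _).trans ((le_max_right _ _).trans b6)
    rw [div_le_iff₀ (by positivity)] at t2
    have t3 : s ≤ s ^ 3 := le_self_pow₀ hs1 (by norm_num)
    have t4 : E * s ^ 3 = 2 * d ^ 3 * s ^ 3 := by rw [hd]; ring
    have t5 : 0 < d ^ 3 := by positivity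
    have t6 : 0 < C * E := by positivity
    have t7 : d ^ 3 * s ≤ d ^ 3 * s ^ 3 := mul_le_mul_of_nonneg_left t3 t5.le
    have t8 : d ^ 3 * s ^ 2 ≤ d ^ 3 * s ^ 3 := mul_le_mul_of_nonneg_left hs23 t5.le
    have t9 : C * (E * s ^ 3) = E3 * s ^ 3 := by rw [← hCE]; ring
    rw [← hr3]
    linarith [b4.2]
  have hpf : pf w f n = (r + f n) / r ^ 4 := by rw [pf, hr4]
  rw [hpf]
  have hmn := (hm n).2
  rw [hr2] at hmn
  apply expMeasure_le n (w n) (hC.w_pos n)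
  intro σ
  refine one_n (hC.w_pos n) C r (f n) hC0 hr1 (by linarith) (by linarith) hr3 ?_ ?_ h2 h3
    ?_ ?_ (m n) hmn σ
  · linarith [mul_le_mul_of_nonneg_right e1 hr0.le]
  · linarith [mul_le_mul_of_nonneg_right e2 hr0.le]
  · intro u
    refine (hmaxr u).trans ((mul_le_mul_of_nonneg_right e3 hr0.le).trans (le_of_eq ?_))
    ring
  · intro u
    linarith [hmaxr u, mul_le_mul_of_nonneg_right e4 hr0.le]

/-- Theorem of the paper: uniform upper bound on the reflected
exploration process `L` up to time `m`, for `f ℓ_n^{2/3}/C ≤ m ≤ 4 f ℓ_n^{2/3}/C`. -/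
theorem reflected_exploration_process_upper_bound
    (w : ∀ n : ℕ, Fin n → ℝ) (μ : Measure ℝ) (hC : CondC w μ)
    (f : ℕ → ℝ) (hf : f =o[atTop] fun n : ℕ => (n : ℝ) ^ ((1 : ℝ) / 3))
    (m : ℕ → ℕ)
    (hm : ∀ n, f n * ell w n ^ ((2 : ℝ) / 3) / Cconst μ ≤ (m n : ℝ) ∧
      (m n : ℝ) ≤ 4 * f n * ell w n ^ ((2 : ℝ) / 3) / Cconst μ) :
    ∃ A > (0 : ℝ), ∃ F : ℝ, ∀ᶠ n : ℕ in atTop, F ≤ f n →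
      expMeasure' n (w n) (pf w f n)
        {ω : (Fin n → Fin n → Bool) × (Fin n → Fin n) |
          ∃ i : ℕ, 1 ≤ i ∧ i ≤ m n ∧
            10 * f n ^ 2 * ell w n ^ ((1 : ℝ) / 3) / Cconst μ
              ≤ (Lproc (graphOf ω.1) ω.2 i : ℝ)}
      ≤ ENNReal.ofReal (A * Real.exp (-f n / A)) := by
  exact final w μ hC f hf m hm
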